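/- arXiv:2207.10483 — 3 statements merged into one kernel-verified Lean document; each statement's English description precedes it below -/
import Mathlib

section
/- For a real number α, the exponent α is admissible for the complement of the projective rank ξ̄_f if and only if α ≥ 1; that is, the functional (ξ̄_f)_α defined by (ξ̄_f)_α(⊕_{d=1}^r Ḡ_d ⊗ Q_d) = ∑_{d=1}^r ξ̄_f(G_d)·d^α is monotone under cohomomorphisms of noncommutative graphs of this form exactly when α ≥ 1. -/
open scoped Kronecker
open Matrix

namespace NCG

/-- Existence of a cohomomorphism from `T` to `S` (written `T ≤ S`). -/
def Cohom {A B : Type} [Fintype A] [DecidableEq A] [Fintype B] [DecidableEq B]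
    (T : Submodule ℂ (Matrix B B ℂ)) (S : Submodule ℂ (Matrix A A ℂ)) : Prop :=
  ∃ (k : ℕ) (E : Fin k → Matrix A B ℂ),
    (∑ i, (E i)ᴴ * E i) = 1 ∧ ∀ i j : Fin k, ∀ M ∈ S, (E i)ᴴ * M * E j ∈ T

/-- The noncommutative graph `Ḡ` of a classical graph `G`. -/
noncomputable def graphNC {V : Type} [Fintype V] [DecidableEq V] (G : SimpleGraph V) :
    Submodule ℂ (Matrix V V ℂ) :=
  Submodule.span ℂ {M | ∃ x y : V, (G.Adj x y ∨ x = y) ∧ M = Matrix.single x y 1}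

/-- The confusability graph `Q_d = ℂ·I_d` of the noiseless `d`-dimensional quantum channel. -/
noncomputable def qGraph (d : ℕ) : Submodule ℂ (Matrix (Fin d) (Fin d) ℂ) :=
  Submodule.span ℂ {(1 : Matrix (Fin d) (Fin d) ℂ)}

/-- Tensor product of noncommutative graphs. -/
noncomputable def ncTensor {A B : Type} [Fintype A] [DecidableEq A] [Fintype B] [DecidableEq B]
    (S : Submodule ℂ (Matrix A A ℂ)) (T : Submodule ℂ (Matrix B B ℂ)) :
    Submodule ℂ (Matrix (A × B) (A × B) ℂ) :=
  Submodule.span ℂ {M | ∃ X ∈ S, ∃ Y ∈ T, M = X ⊗ₖ Y}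

/-- Direct sum of a finite family of noncommutative graphs. -/
noncomputable def ncDirectSum {ι : Type} [Fintype ι] [DecidableEq ι] {V : ι → Type}
    [∀ i, Fintype (V i)] [∀ i, DecidableEq (V i)]
    (S : ∀ i, Submodule ℂ (Matrix (V i) (V i) ℂ)) :
    Submodule ℂ (Matrix (Σ i, V i) (Σ i, V i) ℂ) where
  carrier := {M | (∀ p q : Σ i, V i, p.1 ≠ q.1 → M p q = 0) ∧
    ∀ i, (Matrix.of fun x y : V i => M ⟨i, x⟩ ⟨i, y⟩) ∈ S i}
  add_mem' := by
    rintro a b ⟨ha1, ha2⟩ ⟨hb1, hb2⟩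
    refine ⟨fun p q h => ?_, fun i => ?_⟩
    · simp [Matrix.add_apply, ha1 p q h, hb1 p q h]
    · have h := (S i).add_mem (ha2 i) (hb2 i)
      exact h
  zero_mem' := by
    refine ⟨fun p q h => rfl, fun i => ?_⟩
    have h0 : (Matrix.of fun x y : V i =>
        (0 : Matrix (Σ j, V j) (Σ j, V j) ℂ) ⟨i, x⟩ ⟨i, y⟩) = 0 := rfl
    rw [h0]
    exact (S i).zero_mem
  smul_mem' := by
    rintro c a ⟨ha1, ha2⟩
    refine ⟨fun p q h => ?_, fun i => ?_⟩
    · simp [Matrix.smul_apply, ha1 p q h]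
    · have h := (S i).smul_mem c (ha2 i)
      exact h

/-- `⊕_{d=1}^r Ḡ_d ⊗ Q_d`, where `G d` plays the role of `G_{d+1}` for `d : Fin r`. -/
noncomputable def bigSum {r : ℕ} {V : Fin r → Type} [∀ d, Fintype (V d)] [∀ d, DecidableEq (V d)]
    (G : ∀ d, SimpleGraph (V d)) :
    Submodule ℂ (Matrix (Σ d : Fin r, V d × Fin (d.1 + 1))
      (Σ d : Fin r, V d × Fin (d.1 + 1)) ℂ) :=
  ncDirectSum fun d : Fin r => ncTensor (graphNC (G d)) (qGraph (d.1 + 1))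

/-- The extension `F_α` of a graph parameter `F` with exponent `α` is monotone under
cohomomorphisms of noncommutative graphs of the form `⊕_{d=1}^r Ḡ_d ⊗ Q_d`
(the exponent `α` is admissible for `F`). -/
def MonotoneExt (F : ∀ (V : Type) [Fintype V] [DecidableEq V], SimpleGraph V → ℝ)
    (α : ℝ) : Prop :=
  ∀ (r s : ℕ) (V : Fin r → Type) (W : Fin s → Type)
    [∀ d, Fintype (V d)] [∀ d, DecidableEq (V d)]
    [∀ d, Fintype (W d)] [∀ d, DecidableEq (W d)]
    (G : ∀ d, SimpleGraph (V d)) (H : ∀ d, SimpleGraph (W d)),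
    Cohom (bigSum H) (bigSum G) →
    ∑ d : Fin s, F (W d) (H d) * ((d.1 + 1 : ℕ) : ℝ) ^ α ≤
      ∑ d : Fin r, F (V d) (G d) * ((d.1 + 1 : ℕ) : ℝ) ^ α

/-- The projective rank of a graph. -/
noncomputable def projRank {V : Type} [Fintype V] [DecidableEq V] (G : SimpleGraph V) : ℝ :=
  sInf {t : ℝ | ∃ (a b : ℕ) (P : V → Matrix (Fin a) (Fin a) ℂ), 0 < b ∧
    (∀ g, (P g)ᴴ = P g) ∧ (∀ g, P g * P g = P g) ∧ (∀ g, (P g).rank = b) ∧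
    (∀ g g', G.Adj g g' → P g * P g' = 0) ∧ t = (a : ℝ) / (b : ℝ)}

/-!
For `1 ≤ α`, let `(E_j)` be a cohomomorphism from `⊕ₑ H̄ₑ ⊗ Qₑ` to `⊕_d Ḡ_d ⊗ Q_d`. The block of
`E_j` between a vertex of `Hₑ` and a vertex of `G_d` is a scalar multiple of an isometry from `ℂᵉ`
to `ℂᵈ`, so a nonzero block forces `e ≤ d`. Choosing a nonzero block for every vertex of the source
and tensoring it with isometries representing the complements of the `G_d`, all of them with the
same domain `ℂᵇ`, gives an isometric representation of the join of the complements of the `Hₑ`. For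
each `e`, the ranges belonging to `Hₑ` span a subspace of dimension at least `ξ̄_f(Hₑ) b e`, for
different `e` these subspaces are orthogonal, and they are supported on coordinates in blocks
`d ≥ e`. Giving the coordinates in block `d` the weight `d ^ (α - 1)`, Bessel's inequality bounds
the total weight of these subspaces by that of all coordinates, and dividing by `b` gives the
claim up to an error that vanishes with the choice of representations.

Conversely, a classical bit can be sent through a noiseless qubit, which forces `2 ≤ 2 ^ α`.
-/

section LinearAlgebra

variable {𝕜 : Type*} [RCLike 𝕜]

theorem card_le_of_mul_eq_one {R m n : Type*} [CommRing R] [Nontrivial R] [Fintype m] [Fintype n]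
    [DecidableEq n] {A : Matrix n m R} {B : Matrix m n R} (h : A * B = 1) :
    Fintype.card n ≤ Fintype.card m := by
  rw [← rank_one (R := R) (n := n), ← h]
  exact (rank_mul_le_right A B).trans (rank_le_card_height B)

theorem exists_mul_isometry {m n : Type*} [Fintype m] [Fintype n] (M : Matrix m n 𝕜) {r : ℕ}
    (hr : M.rank = r) : ∃ X : Matrix n (Fin r) 𝕜, (M * X)ᴴ * (M * X) = 1 := by
  classical
  have hfinrank : Module.finrank 𝕜 (LinearMap.range M.toEuclideanLin) = r := by
    rw [← hr, M.rank_eq_finrank_range_toLin (EuclideanSpace.basisFun m 𝕜).toBasis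
      (EuclideanSpace.basisFun n 𝕜).toBasis, ← toEuclideanLin_eq_toLin_orthonormal]
  let u := (stdOrthonormalBasis 𝕜 (LinearMap.range M.toEuclideanLin)).reindex (finCongr hfinrank)
  choose x hx using fun k => (u k).2
  let X : Matrix n (Fin r) 𝕜 := of fun i k => x k i
  have hcol (k : Fin r) : WithLp.toLp 2 ((M * X)ᵀ k) = (u k : EuclideanSpace 𝕜 m) := hx k
  refine ⟨X, ?_⟩
  ext k l
  rw [← inner_matrix_col_col, hcol, hcol, ← Submodule.coe_inner,
    orthonormal_iff_ite.1 u.orthonormal k l, one_apply]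

open scoped ComplexOrder in
theorem exists_smul_isometry {m n : Type*} [Fintype m] [Finite n] [DecidableEq n]
    {X : Matrix m n 𝕜} (hX : X ≠ 0) {c : 𝕜} (hc : Xᴴ * X = c • 1) :
    ∃ t : 𝕜, (t • X)ᴴ * (t • X) = 1 := by
  cases nonempty_fintype n
  obtain ⟨-, j, -⟩ : ∃ i j, X i j ≠ 0 := by
    by_contra! h
    exact hX (Matrix.ext h)
  have hnonneg : 0 ≤ c := by
    simpa [hc] using (posSemidef_conjTranspose_mul_self X).diag_nonneg (i := j)
  obtain ⟨r, hr, rfl⟩ := RCLike.nonneg_iff_exists_ofReal.1 hnonneg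
  have hr0 : r ≠ 0 := by
    rintro rfl
    exact hX (conjTranspose_mul_self_eq_zero.1 (by simpa using hc))
  refine ⟨((√r)⁻¹ : ℝ), ?_⟩
  rw [conjTranspose_smul, Matrix.smul_mul, Matrix.mul_smul, hc, smul_smul, smul_smul,
    RCLike.star_def, RCLike.conj_ofReal, ← RCLike.ofReal_mul, ← RCLike.ofReal_mul, ← mul_inv,
    Real.mul_self_sqrt hr, inv_mul_cancel₀ hr0, RCLike.ofReal_one, one_smul]

variable {J : Type*} [Fintype J]

theorem sum_weight_le_of_orthonormal {K : Type*} [Fintype K] {v : K → EuclideanSpace 𝕜 J}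
    (hv : Orthonormal 𝕜 v) {w : K → ℝ} {u : J → ℝ} (hu : ∀ j, 0 ≤ u j)
    (hsupp : ∀ k j, v k j ≠ 0 → w k ≤ u j) : ∑ k, w k ≤ ∑ j, u j := by
  classical
  have hbessel (j : J) : ∑ k, ‖v k j‖ ^ 2 ≤ 1 := by
    simpa [EuclideanSpace.inner_single_right] using
      hv.sum_inner_products_le (EuclideanSpace.single j (1 : 𝕜)) (s := Finset.univ)
  calc ∑ k, w k = ∑ k, ∑ j, w k * ‖v k j‖ ^ 2 := by
        refine Finset.sum_congr rfl fun k _ => ?_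
        rw [← Finset.mul_sum, ← EuclideanSpace.norm_sq_eq, hv.1 k, one_pow, mul_one]
    _ ≤ ∑ k, ∑ j, u j * ‖v k j‖ ^ 2 := by
        refine Finset.sum_le_sum fun k _ => Finset.sum_le_sum fun j _ => ?_
        by_cases hkj : v k j = 0
        · simp [hkj]
        · exact mul_le_mul_of_nonneg_right (hsupp k j hkj) (by positivity)
    _ = ∑ j, u j * ∑ k, ‖v k j‖ ^ 2 := by
        rw [Finset.sum_comm]
        simp_rw [Finset.mul_sum]
    _ ≤ ∑ j, u j :=
        Finset.sum_le_sum fun j _ => mul_le_of_le_one_right (hu j) (hbessel j)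

theorem sum_finrank_mul_weight_le {ι : Type*} [Fintype ι]
    {R : ι → Submodule 𝕜 (EuclideanSpace 𝕜 J)}
    (hR : OrthogonalFamily 𝕜 (fun i => R i) fun i => (R i).subtypeₗᵢ) {w : ι → ℝ} {u : J → ℝ}
    (hu : ∀ j, 0 ≤ u j) (hsupp : ∀ i, ∀ x ∈ R i, ∀ j, x j ≠ 0 → w i ≤ u j) :
    ∑ i, Module.finrank 𝕜 (R i) * w i ≤ ∑ j, u j := by
  classical
  have hbasis := hR.orthonormal_sigma_orthonormal
    fun i => (stdOrthonormalBasis 𝕜 (R i)).orthonormal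
  have hcount := sum_weight_le_of_orthonormal hbasis (w := fun k => w k.1) hu
    fun k => hsupp k.1 _ (stdOrthonormalBasis 𝕜 (R k.1) k.2).2
  simpa only [Fintype.sum_sigma, Finset.sum_const, Finset.card_univ, Fintype.card_fin,
    nsmul_eq_mul] using hcount

/-- The inclusion of the `i`-th summand into the direct sum of the coordinate spaces
`EuclideanSpace 𝕜 (I i)`. -/
def sigmaIncl (𝕜 : Type*) [RCLike 𝕜] {ι : Type*} [DecidableEq ι] (I : ι → Type*)
    [∀ i, DecidableEq (I i)] (i : ι) : Matrix (Σ i, I i) (I i) 𝕜 :=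
  of fun p x => (1 : Matrix (Σ i, I i) (Σ i, I i) 𝕜) p ⟨i, x⟩

theorem sigmaIncl_mul_apply_of_ne {ι : Type*} [DecidableEq ι] {I : ι → Type*}
    [∀ i, DecidableEq (I i)] {i : ι} [Fintype (I i)] {Q : Type*} (M : Matrix (I i) Q 𝕜)
    {p : Σ i, I i} (hp : p.1 ≠ i) (q : Q) : (sigmaIncl 𝕜 I i * M) p q = 0 := by
  rw [mul_apply]
  refine Finset.sum_eq_zero fun x _ => ?_
  have hpx : p ≠ ⟨i, x⟩ := fun h => hp (congrArg Sigma.fst h)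
  simp [sigmaIncl, one_apply_ne hpx]

end LinearAlgebra

section IsometricRep

variable {𝕜 : Type*} [RCLike 𝕜] {V : Type*} {G G' : SimpleGraph V} {J : Type*} [Fintype J]

/-- `A` represents the vertices of `G` by isometries, adjacent vertices having orthogonal ranges;
the domains `EuclideanSpace 𝕜 (β v)` may depend on the vertex. With constant `β` this is the
isometry form of a `card J / card β`-projective representation, see `projRank_eq_sInf`. -/
structure IsIsometricRep (G : SimpleGraph V) {β : V → Type*} [∀ v, DecidableEq (β v)]
    (A : ∀ v, Matrix J (β v) 𝕜) : Prop where
  isometry : ∀ v, (A v)ᴴ * A v = 1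
  orthogonal : ∀ ⦃v w⦄, G.Adj v w → (A v)ᴴ * A w = 0

/-- An `a / b`-projective representation of `G`, where `a` is the cardinality of `n`. -/
structure IsProjectiveRep {n : Type*} [Fintype n] (G : SimpleGraph V) (P : V → Matrix n n 𝕜)
    (b : ℕ) : Prop where
  conjTranspose_eq : ∀ v, (P v)ᴴ = P v
  mul_self : ∀ v, P v * P v = P v
  rank_eq : ∀ v, (P v).rank = b
  mul_eq_zero : ∀ v w, G.Adj v w → P v * P w = 0

namespace IsIsometricRep

variable {β : V → Type*} [∀ v, DecidableEq (β v)] {A : ∀ v, Matrix J (β v) 𝕜}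

theorem mono (hA : IsIsometricRep G A) (h : G' ≤ G) : IsIsometricRep G' A :=
  ⟨hA.isometry, fun _ _ hadj => hA.orthogonal (h hadj)⟩

theorem submatrix (hA : IsIsometricRep G A) {J' : Type*} [Fintype J'] {β' : V → Type*}
    [∀ v, DecidableEq (β' v)] (e : J' ≃ J) (f : ∀ v, β' v ≃ β v) :
    IsIsometricRep G fun v => (A v).submatrix e (f v) where
  isometry v := by
    rw [conjTranspose_submatrix, submatrix_mul_equiv, hA.isometry, submatrix_one_equiv]
  orthogonal v w hadj := by
    rw [conjTranspose_submatrix, submatrix_mul_equiv, hA.orthogonal hadj]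
    rfl

theorem kronecker_one (hA : IsIsometricRep G A) (γ : Type*) [Fintype γ] [DecidableEq γ] :
    IsIsometricRep G fun v => A v ⊗ₖ (1 : Matrix γ γ 𝕜) where
  isometry v := by
    rw [conjTranspose_kronecker, ← mul_kronecker_mul, hA.isometry, conjTranspose_one, one_mul,
      one_kronecker_one]
  orthogonal v w hadj := by
    rw [conjTranspose_kronecker, ← mul_kronecker_mul, hA.orthogonal hadj, zero_kronecker]

theorem card_sigma_le [Fintype V] [∀ v, Fintype (β v)]
    (hA : IsIsometricRep ⊤ A) : Fintype.card (Σ v, β v) ≤ Fintype.card J := by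
  classical
  let C : Matrix J (Σ v, β v) 𝕜 := of fun j q => A q.1 j q.2
  refine card_le_of_mul_eq_one (A := Cᴴ) (B := C) ?_
  ext ⟨v, x⟩ ⟨w, y⟩
  change ((A v)ᴴ * A w) x y = _
  by_cases hvw : v = w
  · subst hvw
    simp [hA.isometry, one_apply]
  · simp [hA.orthogonal hvw, hvw]

theorem isProjectiveRep {β : Type*} [Fintype β] [DecidableEq β] {A : V → Matrix J β ℂ}
    (hA : IsIsometricRep G A) :
    IsProjectiveRep G (fun v => A v * (A v)ᴴ) (Fintype.card β) where
  conjTranspose_eq v := by simp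
  mul_self v := by
    rw [Matrix.mul_assoc, ← Matrix.mul_assoc (A v)ᴴ, hA.isometry, Matrix.one_mul]
  rank_eq v := by
    open scoped ComplexOrder in
    rw [rank_self_mul_conjTranspose, ← rank_conjTranspose_mul_self, hA.isometry, rank_one]
  mul_eq_zero v w hadj := by
    rw [Matrix.mul_assoc, ← Matrix.mul_assoc (A v)ᴴ, hA.orthogonal hadj, Matrix.zero_mul,
      Matrix.mul_zero]

/-- Writing the columns of `A` in an orthonormal basis of `R` preserves all inner products. -/
theorem exists_compression {β : Type*} [DecidableEq β] {A : V → Matrix J β 𝕜}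
    (hA : IsIsometricRep G A) {R : Submodule 𝕜 (EuclideanSpace 𝕜 J)}
    (hR : ∀ v q, WithLp.toLp 2 ((A v)ᵀ q) ∈ R) :
    ∃ B : V → Matrix (Fin (Module.finrank 𝕜 R)) β 𝕜, IsIsometricRep G B := by
  let b := stdOrthonormalBasis 𝕜 R
  let B (v : V) : Matrix (Fin (Module.finrank 𝕜 R)) β 𝕜 :=
    of fun i q => inner 𝕜 (b i) ⟨_, hR v q⟩
  have hgram (v w : V) : (B v)ᴴ * B w = (A v)ᴴ * A w := by
    ext q q'
    have hparseval := b.sum_inner_mul_inner ⟨_, hR v q⟩ ⟨_, hR w q'⟩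
    rw [Submodule.coe_inner, inner_matrix_col_col] at hparseval
    simpa [B, mul_apply] using hparseval
  exact ⟨B, fun v => by rw [hgram, hA.isometry],
    fun v w hadj => by rw [hgram, hA.orthogonal hadj]⟩

end IsIsometricRep

theorem isIsometricRep_sigmaIncl {ι : Type*} [DecidableEq ι] [Fintype ι] (I : ι → Type*)
    [∀ i, DecidableEq (I i)] [∀ i, Fintype (I i)] :
    IsIsometricRep ⊤ (sigmaIncl 𝕜 I) where
  isometry i := by
    ext x y
    simp [sigmaIncl, mul_apply, one_apply, eq_comm]
  orthogonal i i' hne := by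
    ext x y
    simp [sigmaIncl, mul_apply, one_apply, hne.ne']

theorem exists_isIsometricRep_card [Fintype V] (G : SimpleGraph V) :
    ∃ A : V → Matrix (Fin (Fintype.card V)) (Fin 1) 𝕜, IsIsometricRep G A := by
  classical
  exact ⟨_, ((isIsometricRep_sigmaIncl fun _ : V => Fin 1).mono le_top).submatrix
    (Fintype.equivFinOfCardEq (by simp)).symm fun _ => Equiv.refl _⟩

theorem IsProjectiveRep.exists_isIsometricRep {n : Type*} [Fintype n] {P : V → Matrix n n 𝕜}
    {b : ℕ} (hP : IsProjectiveRep G P b) :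
    ∃ A : V → Matrix n (Fin b) 𝕜, IsIsometricRep G A := by
  choose X hX using fun v => exists_mul_isometry (P v) (hP.rank_eq v)
  refine ⟨fun v => P v * X v, hX, fun v w hadj => ?_⟩
  rw [conjTranspose_mul, hP.conjTranspose_eq, Matrix.mul_assoc, ← Matrix.mul_assoc (P v),
    hP.mul_eq_zero v w hadj, Matrix.zero_mul, Matrix.mul_zero]

end IsometricRep

section ProjRank

variable {V : Type} [Fintype V] [DecidableEq V] {G : SimpleGraph V}

theorem projRank_eq_sInf (G : SimpleGraph V) :
    projRank G = sInf {t : ℝ | ∃ (a b : ℕ) (A : V → Matrix (Fin a) (Fin b) ℂ),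
      0 < b ∧ IsIsometricRep G A ∧ t = a / b} := by
  refine congrArg sInf (Set.ext fun t => ⟨?_, ?_⟩)
  · rintro ⟨a, b, P, hb, h1, h2, h3, h4, rfl⟩
    obtain ⟨A, hA⟩ := IsProjectiveRep.exists_isIsometricRep ⟨h1, h2, h3, h4⟩
    exact ⟨a, b, A, hb, hA, rfl⟩
  · rintro ⟨a, b, A, hb, hA, rfl⟩
    obtain ⟨h1, h2, h3, h4⟩ := hA.isProjectiveRep
    exact ⟨a, b, _, hb, h1, h2, by simpa using h3, h4, rfl⟩

theorem IsIsometricRep.projRank_mul_card_le {J β : Type*} [Fintype J] [Fintype β] [DecidableEq β]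
    {A : V → Matrix J β ℂ} (hA : IsIsometricRep G A) :
    projRank G * Fintype.card β ≤ Fintype.card J := by
  cases isEmpty_or_nonempty β
  · simp
  rw [← le_div_iff₀ (by exact_mod_cast Fintype.card_pos), projRank_eq_sInf]
  refine csInf_le ⟨0, ?_⟩ ⟨_, _, _, Fintype.card_pos, hA.submatrix (Fintype.equivFin J).symm
    fun _ => (Fintype.equivFin β).symm, rfl⟩
  rintro _ ⟨a, b, -, -, -, rfl⟩
  positivity

theorem exists_isIsometricRep_div_lt {t : ℝ} (ht : projRank G < t) :
    ∃ (a b : ℕ) (A : V → Matrix (Fin a) (Fin b) ℂ),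
      0 < b ∧ IsIsometricRep G A ∧ (a : ℝ) / b < t := by
  obtain ⟨A, hA⟩ := exists_isIsometricRep_card (𝕜 := ℂ) G
  rw [projRank_eq_sInf] at ht
  obtain ⟨_, ⟨a, b, B, hb, hB, rfl⟩, hlt⟩ :=
    exists_lt_of_csInf_lt (by exact ⟨_, _, _, A, one_pos, hA, rfl⟩) ht
  exact ⟨a, b, B, hb, hB, hlt⟩

theorem projRank_le_card (G : SimpleGraph V) : projRank G ≤ Fintype.card V := by
  obtain ⟨A, hA⟩ := exists_isIsometricRep_card (𝕜 := ℂ) G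
  simpa using hA.projRank_mul_card_le

theorem projRank_top : projRank (⊤ : SimpleGraph V) = Fintype.card V := by
  refine (projRank_le_card ⊤).antisymm (le_of_forall_gt fun t ht => ?_)
  obtain ⟨a, b, A, hb, hA, hlt⟩ := exists_isIsometricRep_div_lt ht
  refine lt_of_le_of_lt ?_ hlt
  rw [le_div_iff₀ (by exact_mod_cast hb)]
  exact_mod_cast (by simpa using hA.card_sigma_le : Fintype.card V * b ≤ a)

end ProjRank

section Join

variable {ι : Type*} {V : ι → Type*}

/-- The join of a family of graphs: vertices of different summands are adjacent. The complement of
`join fun i => (G i)ᶜ` is the disjoint union of the `G i`. -/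
def join (G : ∀ i, SimpleGraph (V i)) : SimpleGraph (Σ i, V i) :=
  SimpleGraph.completeMultipartiteGraph V ⊔ ⨆ i, (G i).map (Function.Embedding.sigmaMk i)

variable (G : ∀ i, SimpleGraph (V i))

theorem join_adj_of_ne {p q : Σ i, V i} (h : p.1 ≠ q.1) : (join G).Adj p q :=
  Or.inl h

theorem join_adj_mk {i : ι} {v w : V i} : (join G).Adj ⟨i, v⟩ ⟨i, w⟩ ↔ (G i).Adj v w := by
  refine ⟨?_, fun h => Or.inr ?_⟩
  · rintro (h | h)
    · exact absurd rfl h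
    · simp only [SimpleGraph.iSup_adj, SimpleGraph.map_adj] at h
      obtain ⟨j, v', w', hadj, hv, hw⟩ := h
      cases hv
      cases hw
      exact hadj
  · exact SimpleGraph.iSup_adj.2 ⟨i, (SimpleGraph.map_adj _ _ _ _).2 ⟨v, w, h, rfl, rfl⟩⟩

end Join

/-- The ranges of the representations of the summands span orthogonal subspaces, each of dimension
at least `projRank (G i) * card (β i)`. -/
theorem IsIsometricRep.sum_projRank_mul_weight_le {ι : Type*} [Fintype ι] {V : ι → Type}
    [∀ i, Fintype (V i)] [∀ i, DecidableEq (V i)] {G : ∀ i, SimpleGraph (V i)}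
    {J : Type*} [Fintype J] {β : ι → Type*} [∀ i, Fintype (β i)] [∀ i, DecidableEq (β i)]
    {A : ∀ p : Σ i, V i, Matrix J (β p.1) ℂ} (hA : IsIsometricRep (join G) A)
    {w : ι → ℝ} (hw : ∀ i, 0 ≤ w i) {u : J → ℝ} (hu : ∀ j, 0 ≤ u j)
    (hsupp : ∀ p j q, A p j q ≠ 0 → w p.1 ≤ u j) :
    ∑ i, projRank (G i) * Fintype.card (β i) * w i ≤ ∑ j, u j := by
  let R (i : ι) : Submodule ℂ (EuclideanSpace ℂ J) :=
    Submodule.span ℂ (Set.range fun x : V i × β i => WithLp.toLp 2 ((A ⟨i, x.1⟩)ᵀ x.2))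
  have hfinrank (i : ι) : projRank (G i) * Fintype.card (β i) ≤ Module.finrank ℂ (R i) := by
    have hAi : IsIsometricRep (G i) fun v => A ⟨i, v⟩ :=
      ⟨fun v => hA.isometry ⟨i, v⟩, fun v v' hadj => hA.orthogonal ((join_adj_mk G).2 hadj)⟩
    obtain ⟨B, hB⟩ := hAi.exists_compression (R := R i)
      fun v q => Submodule.subset_span ⟨(v, q), rfl⟩
    simpa using hB.projRank_mul_card_le
  have hortho : OrthogonalFamily ℂ (fun i => R i) fun i => (R i).subtypeₗᵢ := by
    refine OrthogonalFamily.of_pairwise fun i i' hne => Submodule.isOrtho_span.2 ?_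
    rintro _ ⟨⟨v, q⟩, rfl⟩ _ ⟨⟨v', q'⟩, rfl⟩
    have horth := congrFun₂
      (hA.orthogonal (join_adj_of_ne G (p := ⟨i, v⟩) (q := ⟨i', v'⟩) hne)) q q'
    simpa [PiLp.inner_apply, mul_apply, mul_comm] using horth
  have hsuppR (i : ι) : ∀ x ∈ R i, ∀ j, x j ≠ 0 → w i ≤ u j := by
    intro x hx j
    contrapose!
    intro hlt
    have hker : R i ≤ LinearMap.ker (PiLp.projₗ 2 (fun _ => ℂ) j : _ →ₗ[ℂ] ℂ) := by
      refine Submodule.span_le.2 ?_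
      rintro _ ⟨⟨v, q⟩, rfl⟩
      exact not_not.1 fun hne => hlt.not_ge (hsupp ⟨i, v⟩ j q hne)
    exact hker hx
  calc ∑ i, projRank (G i) * Fintype.card (β i) * w i
      ≤ ∑ i, Module.finrank ℂ (R i) * w i :=
        Finset.sum_le_sum fun i _ => mul_le_mul_of_nonneg_right (hfinrank i) (hw i)
    _ ≤ ∑ j, u j := sum_finrank_mul_weight_le hortho hu hsuppR

theorem exists_isIsometricRep_common_denom {ι : Type*} [Finite ι] {V : ι → Type}
    [∀ i, Fintype (V i)] [∀ i, DecidableEq (V i)] {G : ∀ i, SimpleGraph (V i)} {t : ι → ℝ}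
    (ht : ∀ i, projRank (G i) < t i) :
    ∃ (a : ι → ℕ) (b : ℕ) (A : ∀ i, V i → Matrix (Fin (a i)) (Fin b) ℂ),
      0 < b ∧ (∀ i, IsIsometricRep (G i) (A i)) ∧ ∀ i, (a i : ℝ) / b < t i := by
  cases nonempty_fintype ι
  choose a b A hb hA hlt using fun i => exists_isIsometricRep_div_lt (ht i)
  choose m hm using fun i => Finset.dvd_prod_of_mem b (Finset.mem_univ i)
  have hprod : 0 < ∏ i, b i := Finset.prod_pos fun i _ => hb i
  refine ⟨fun i => a i * m i, ∏ i, b i, _, hprod, fun i =>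
    ((hA i).kronecker_one (Fin (m i))).submatrix finProdFinEquiv.symm
      fun _ => (finCongr (hm i)).trans finProdFinEquiv.symm, fun i => ?_⟩
  have hmi : (m i : ℝ) ≠ 0 := by
    exact_mod_cast (Nat.pos_of_mul_pos_left (hm i ▸ hprod)).ne'
  rw [hm i, Nat.cast_mul, Nat.cast_mul, mul_div_mul_right _ _ hmi]
  exact hlt i

section NoncommutativeGraphs

theorem mem_graphNC {V : Type} [Fintype V] [DecidableEq V] {G : SimpleGraph V}
    {M : Matrix V V ℂ} : M ∈ graphNC G ↔ ∀ v w, Gᶜ.Adj v w → M v w = 0 := by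
  refine ⟨fun hM v w hvw => ?_, fun hM => ?_⟩
  · induction hM using Submodule.span_induction with
    | mem M h =>
      obtain ⟨v', w', h, rfl⟩ := h
      refine single_apply_of_ne _ _ _ _ _ ?_
      rintro ⟨rfl, rfl⟩
      exact h.elim hvw.2 hvw.1
    | zero => rfl
    | add M N _ _ hM hN => rw [Matrix.add_apply, hM, hN, add_zero]
    | smul c M _ hM => rw [Matrix.smul_apply, hM, smul_zero]
  · rw [matrix_eq_sum_single M]
    refine Submodule.sum_mem _ fun v _ => Submodule.sum_mem _ fun w _ => ?_
    by_cases hvw : Gᶜ.Adj v w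
    · simp [hM v w hvw]
    · have hmem : single v w (1 : ℂ) ∈ graphNC G :=
        Submodule.subset_span ⟨v, w, by rw [SimpleGraph.compl_adj] at hvw; tauto, rfl⟩
      simpa using Submodule.smul_mem _ (M v w) hmem

theorem mem_ncTensor_qGraph {B : Type} [Fintype B] [DecidableEq B]
    {S : Submodule ℂ (Matrix B B ℂ)} {n : ℕ} {M : Matrix (B × Fin n) (B × Fin n) ℂ} :
    M ∈ ncTensor S (qGraph n) ↔ ∃ X ∈ S, M = X ⊗ₖ (1 : Matrix (Fin n) (Fin n) ℂ) := by
  refine ⟨fun hM => ?_, ?_⟩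
  · induction hM using Submodule.span_induction with
    | mem M h =>
      obtain ⟨X, hX, Y, hY, rfl⟩ := h
      obtain ⟨c, rfl⟩ := Submodule.mem_span_singleton.1 hY
      exact ⟨c • X, S.smul_mem c hX, by rw [kronecker_smul, smul_kronecker]⟩
    | zero => exact ⟨0, S.zero_mem, by rw [zero_kronecker]⟩
    | add M N _ _ hM hN =>
      obtain ⟨X, hX, rfl⟩ := hM
      obtain ⟨Y, hY, rfl⟩ := hN
      exact ⟨X + Y, S.add_mem hX hY, by rw [add_kronecker]⟩
    | smul c M _ hM =>
      obtain ⟨X, hX, rfl⟩ := hM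
      exact ⟨c • X, S.smul_mem c hX, by rw [smul_kronecker]⟩
  · rintro ⟨X, hX, rfl⟩
    exact Submodule.subset_span ⟨X, hX, 1, Submodule.mem_span_singleton_self 1, rfl⟩

theorem mem_ncDirectSum {ι : Type} [Fintype ι] [DecidableEq ι] {B : ι → Type}
    [∀ i, Fintype (B i)] [∀ i, DecidableEq (B i)] {S : ∀ i, Submodule ℂ (Matrix (B i) (B i) ℂ)}
    {M : Matrix (Σ i, B i) (Σ i, B i) ℂ} : M ∈ ncDirectSum S ↔
      (∀ p q : Σ i, B i, p.1 ≠ q.1 → M p q = 0) ∧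
        ∀ i, M.submatrix (Sigma.mk i) (Sigma.mk i) ∈ S i :=
  Iff.rfl

variable {ι κ : Type} {V : ι → Type} {W : κ → Type} {n : ι → ℕ} {m : κ → ℕ}

/-- The block of `M` between the quantum systems attached to the vertices `p` and `q`. -/
def vertexBlock (M : Matrix (Σ i, V i × Fin (n i)) (Σ k, W k × Fin (m k)) ℂ) (p : Σ i, V i)
    (q : Σ k, W k) : Matrix (Fin (n p.1)) (Fin (m q.1)) ℂ :=
  M.submatrix (fun x => ⟨p.1, p.2, x⟩) fun y => ⟨q.1, q.2, y⟩

theorem exists_vertexBlock_ne_zero [Fintype ι] [∀ i, Fintype (V i)] [DecidableEq κ]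
    [∀ k, DecidableEq (W k)] {I : Type*} [Fintype I]
    {E : I → Matrix (Σ i, V i × Fin (n i)) (Σ k, W k × Fin (m k)) ℂ}
    (hE : ∑ i, (E i)ᴴ * E i = 1) {q : Σ k, W k} (hq : 0 < m q.1) :
    ∃ i p, vertexBlock (E i) p q ≠ 0 := by
  by_contra! h
  have hentry (i : I) (x) : E i x ⟨q.1, q.2, ⟨0, hq⟩⟩ = 0 :=
    congrFun₂ (h i ⟨x.1, x.2.1⟩) x.2.2 ⟨0, hq⟩
  have hdiag := congrFun₂ hE ⟨q.1, q.2, ⟨0, hq⟩⟩ ⟨q.1, q.2, ⟨0, hq⟩⟩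
  rw [one_apply_eq, Matrix.sum_apply] at hdiag
  simp [mul_apply, hentry] at hdiag

variable [Fintype ι] [DecidableEq ι] [∀ i, Fintype (V i)] [∀ i, DecidableEq (V i)]

/-- The direct sum `⊕ᵢ Ḡᵢ ⊗ Q_{nᵢ}`, of which `bigSum` is the case `nᵢ = i + 1`. -/
noncomputable def quantumSum (G : ∀ i, SimpleGraph (V i)) (n : ι → ℕ) :
    Submodule ℂ (Matrix (Σ i, V i × Fin (n i)) (Σ i, V i × Fin (n i)) ℂ) :=
  ncDirectSum fun i => ncTensor (graphNC (G i)) (qGraph (n i))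

/-- The matrix `|v⟩⟨v'| ⊗ I` in the summand `i`. -/
noncomputable def vertexUnit (n : ι → ℕ) (i : ι) (v v' : V i) :
    Matrix (Σ i, V i × Fin (n i)) (Σ i, V i × Fin (n i)) ℂ :=
  ∑ x : Fin (n i), single ⟨i, v, x⟩ ⟨i, v', x⟩ 1

theorem conjTranspose_vertexBlock_mul_vertexBlock
    (E F : Matrix (Σ i, V i × Fin (n i)) (Σ k, W k × Fin (m k)) ℂ) {i : ι} (v v' : V i)
    (q q' : Σ k, W k) :
    (vertexBlock E ⟨i, v⟩ q)ᴴ * vertexBlock F ⟨i, v'⟩ q' =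
      vertexBlock (Eᴴ * vertexUnit n i v v' * F) q q' := by
  ext y y'
  change _ = (Eᴴ * vertexUnit n i v v' * F) ⟨q.1, q.2, y⟩ ⟨q'.1, q'.2, y'⟩
  rw [vertexUnit, Matrix.mul_sum, Matrix.sum_mul, Matrix.sum_apply, mul_apply]
  refine Finset.sum_congr rfl fun x _ => ?_
  rw [Matrix.mul_assoc, mul_apply, Finset.sum_eq_single ⟨i, v, x⟩]
  · simp [vertexBlock]
  · intro p _ hp
    rw [single_mul_apply_of_ne (c := (1 : ℂ)) (h := hp), mul_zero]
  · simp

variable {G : ∀ i, SimpleGraph (V i)}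

theorem vertexBlock_eq_zero {M : Matrix (Σ i, V i × Fin (n i)) (Σ i, V i × Fin (n i)) ℂ}
    (hM : M ∈ quantumSum G n) {p q : Σ i, V i} (hpq : (join fun i => (G i)ᶜ).Adj p q) :
    vertexBlock M p q = 0 := by
  obtain ⟨hoff, hdiag⟩ := mem_ncDirectSum.1 hM
  obtain ⟨i, v⟩ := p
  obtain ⟨j, w⟩ := q
  ext x y
  by_cases hij : i = j
  · subst hij
    obtain ⟨X, hX, hMX⟩ := mem_ncTensor_qGraph.1 (hdiag i)
    refine (congrFun₂ hMX (v, x) (w, y)).trans ?_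
    rw [kroneckerMap_apply, mem_graphNC.1 hX v w ((join_adj_mk fun i => (G i)ᶜ).1 hpq), zero_mul]
    rfl
  · exact hoff _ _ hij

theorem exists_vertexBlock_self_eq_smul_one
    {M : Matrix (Σ i, V i × Fin (n i)) (Σ i, V i × Fin (n i)) ℂ} (hM : M ∈ quantumSum G n)
    (p : Σ i, V i) : ∃ c : ℂ, vertexBlock M p p = c • 1 := by
  obtain ⟨X, -, hMX⟩ := mem_ncTensor_qGraph.1 ((mem_ncDirectSum.1 hM).2 p.1)
  refine ⟨X p.2 p.2, ?_⟩
  ext x y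
  exact congrFun₂ hMX (p.2, x) (p.2, y)

theorem vertexUnit_mem_quantumSum {i : ι} {v v' : V i} (h : ¬(G i)ᶜ.Adj v v') :
    vertexUnit n i v v' ∈ quantumSum G n := by
  refine mem_ncDirectSum.2 ⟨fun p q hpq => ?_, fun j => ?_⟩
  · rw [vertexUnit, Matrix.sum_apply]
    refine Finset.sum_eq_zero fun x _ => single_apply_of_ne _ _ _ _ _ ?_
    rintro ⟨rfl, rfl⟩
    exact hpq rfl
  · by_cases hij : i = j
    · subst hij
      have hmem : single v v' (1 : ℂ) ∈ graphNC (G i) := by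
        refine mem_graphNC.2 fun w w' hadj => single_apply_of_ne _ _ _ _ _ ?_
        rintro ⟨rfl, rfl⟩
        exact h hadj
      refine mem_ncTensor_qGraph.2 ⟨_, hmem, ?_⟩
      ext ⟨w, x⟩ ⟨w', y⟩
      simp only [vertexUnit, submatrix_apply, Matrix.sum_apply, single_apply, kroneckerMap_apply,
        one_apply]
      by_cases hw : v = w <;> by_cases hw' : v' = w' <;> by_cases hxy : x = y <;>
        simp [hw, hw', hxy]
    · convert Submodule.zero_mem _
      ext x y
      simp only [vertexUnit, submatrix_apply, Matrix.sum_apply]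
      refine Finset.sum_eq_zero fun z _ => single_apply_of_ne _ _ _ _ _ ?_
      rintro ⟨h, -⟩
      exact hij (congrArg Sigma.fst h)

end NoncommutativeGraphs

section Monotonicity

variable {ι κ : Type} [Fintype ι] [DecidableEq ι] [Fintype κ] [DecidableEq κ]
  {V : ι → Type} [∀ i, Fintype (V i)] [∀ i, DecidableEq (V i)]
  {W : κ → Type} [∀ k, Fintype (W k)] [∀ k, DecidableEq (W k)]
  {G : ∀ i, SimpleGraph (V i)} {n : ι → ℕ} {H : ∀ k, SimpleGraph (W k)} {m : κ → ℕ}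

theorem Cohom.exists_isometries (hm : ∀ k, 0 < m k)
    (h : Cohom (quantumSum H m) (quantumSum G n)) :
    ∃ (φ : (Σ k, W k) → Σ i, V i)
      (X : ∀ (q : Σ k, W k) (p : Σ i, V i), Matrix (Fin (n p.1)) (Fin (m q.1)) ℂ),
      (∀ q, (X q (φ q))ᴴ * X q (φ q) = 1) ∧
      ∀ q q', (join fun k => (H k)ᶜ).Adj q q' → ∀ i (v v' : V i), ¬(G i)ᶜ.Adj v v' →
        (X q ⟨i, v⟩)ᴴ * X q' ⟨i, v'⟩ = 0 := by
  obtain ⟨N, E, hE, hmem⟩ := h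
  have hself (j : Fin N) (p : Σ i, V i) (q : Σ k, W k) :
      ∃ c : ℂ, (vertexBlock (E j) p q)ᴴ * vertexBlock (E j) p q = c • 1 := by
    have hpp := hmem j j _ (vertexUnit_mem_quantumSum ((G p.1)ᶜ.irrefl (v := p.2)))
    obtain ⟨c, hc⟩ := exists_vertexBlock_self_eq_smul_one hpp q
    exact ⟨c, (conjTranspose_vertexBlock_mul_vertexBlock _ _ _ _ _ _).trans hc⟩
  choose j φ hφ using fun q : Σ k, W k => exists_vertexBlock_ne_zero hE (hm q.1)
  choose c hc using hself
  choose t ht using fun q => exists_smul_isometry (hφ q) (hc (j q) (φ q) q)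
  refine ⟨φ, fun q p => t q • vertexBlock (E (j q)) p q, ht, fun q q' hqq' i v v' hvv' => ?_⟩
  rw [conjTranspose_smul, Matrix.smul_mul, Matrix.mul_smul,
    conjTranspose_vertexBlock_mul_vertexBlock,
    vertexBlock_eq_zero (hmem (j q) (j q') _ (vertexUnit_mem_quantumSum hvv')) hqq', smul_zero,
    smul_zero]

section

variable {J : ι → Type*} [∀ i, Fintype (J i)] {β : Type*} [DecidableEq β]
  {A : ∀ i, V i → Matrix (J i) β ℂ}

theorem Cohom.exists_isIsometricRep_join (hm : ∀ k, 0 < m k)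
    (h : Cohom (quantumSum H m) (quantumSum G n)) (hA : ∀ i, IsIsometricRep (G i)ᶜ (A i)) :
    ∃ B : ∀ q : Σ k, W k, Matrix (Σ i, J i × Fin (n i)) (β × Fin (m q.1)) ℂ,
      IsIsometricRep (join fun k => (H k)ᶜ) B ∧ ∀ q p x, B q p x ≠ 0 → m q.1 ≤ n p.1 := by
  classical
  obtain ⟨φ, X, hX, hXorth⟩ := h.exists_isometries hm
  let I (i : ι) : Type _ := J i × Fin (n i)
  have hincl := isIsometricRep_sigmaIncl (𝕜 := ℂ) I
  let C (q : Σ k, W k) (p : Σ i, V i) : Matrix (Σ i, I i) (β × Fin (m q.1)) ℂ :=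
    sigmaIncl ℂ I p.1 * (A p.1 p.2 ⊗ₖ X q p)
  have hgram (q q' : Σ k, W k) {i : ι} (v v' : V i) :
      (C q ⟨i, v⟩)ᴴ * C q' ⟨i, v'⟩ =
        ((A i v)ᴴ * A i v') ⊗ₖ ((X q ⟨i, v⟩)ᴴ * X q' ⟨i, v'⟩) := by
    rw [conjTranspose_mul, Matrix.mul_assoc, ← Matrix.mul_assoc (sigmaIncl ℂ I i)ᴴ,
      hincl.isometry, Matrix.one_mul, conjTranspose_kronecker, mul_kronecker_mul]
  refine ⟨fun q => C q (φ q), ⟨fun q => ?_, fun q q' hqq' => ?_⟩, fun q p x hne => ?_⟩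
  · rw [hgram, (hA _).isometry, hX, one_kronecker_one]
  · generalize φ q = p, φ q' = p'
    obtain ⟨i, v⟩ := p
    obtain ⟨i', v'⟩ := p'
    by_cases hii' : i = i'
    · subst hii'
      rw [hgram]
      by_cases hvv' : (G i)ᶜ.Adj v v'
      · rw [(hA i).orthogonal hvv', zero_kronecker]
      · rw [hXorth q q' hqq' i v v' hvv', kronecker_zero]
    · rw [conjTranspose_mul, Matrix.mul_assoc, ← Matrix.mul_assoc (sigmaIncl ℂ I i)ᴴ,
        hincl.orthogonal hii', Matrix.zero_mul, Matrix.mul_zero]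
  · have hp : p.1 = (φ q).1 := not_imp_comm.1 (sigmaIncl_mul_apply_of_ne _ · x) hne
    simpa [hp] using card_le_of_mul_eq_one (hX q)

theorem Cohom.sum_projRank_compl_le_of_isIsometricRep [Fintype β] [Nonempty β]
    (hm : ∀ k, 0 < m k) (h : Cohom (quantumSum H m) (quantumSum G n))
    (hA : ∀ i, IsIsometricRep (G i)ᶜ (A i))
    {w : ℕ → ℝ} (hw : Monotone w) (hw0 : ∀ d, 0 ≤ w d) :
    ∑ k, projRank (H k)ᶜ * (m k * w (m k)) ≤
      ∑ i, (Fintype.card (J i) : ℝ) / Fintype.card β * (n i * w (n i)) := by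
  obtain ⟨B, hB, hsupp⟩ := h.exists_isIsometricRep_join hm hA
  have hcount := IsIsometricRep.sum_projRank_mul_weight_le (β := fun k => β × Fin (m k)) hB
    (w := fun k => w (m k)) (u := fun p => w (n p.1)) (fun _ => hw0 _) (fun _ => hw0 _)
    fun q p x hne => hw (hsupp q p x hne)
  have hβ : (0 : ℝ) < Fintype.card β := by exact_mod_cast Fintype.card_pos
  simp only [Fintype.sum_sigma, Finset.sum_const, Finset.card_univ, Fintype.card_prod,
    Fintype.card_fin, Nat.cast_mul, nsmul_eq_mul] at hcount
  refine le_of_mul_le_mul_right ?_ hβ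
  rw [Finset.sum_mul, Finset.sum_mul]
  exact (Finset.sum_congr rfl fun k _ => by ring).trans_le
    (hcount.trans_eq (Finset.sum_congr rfl fun i _ => by field_simp))

end

theorem Cohom.sum_projRank_compl_le (hm : ∀ k, 0 < m k)
    (h : Cohom (quantumSum H m) (quantumSum G n)) {w : ℕ → ℝ} (hw : Monotone w)
    (hw0 : ∀ d, 0 ≤ w d) :
    ∑ k, projRank (H k)ᶜ * (m k * w (m k)) ≤ ∑ i, projRank (G i)ᶜ * (n i * w (n i)) := by
  have hlim : Filter.Tendsto (fun ε : ℝ => ∑ i, (projRank (G i)ᶜ + ε) * (n i * w (n i)))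
      (nhdsWithin 0 (Set.Ioi 0)) (nhds (∑ i, projRank (G i)ᶜ * (n i * w (n i)))) :=
    (Continuous.tendsto' (by fun_prop) _ _ (by simp)).mono_left nhdsWithin_le_nhds
  refine ge_of_tendsto hlim (eventually_mem_nhdsWithin.mono fun ε hε => ?_)
  obtain ⟨a, b, A, hb, hA, hlt⟩ := exists_isIsometricRep_common_denom
    fun i => lt_add_of_pos_right (projRank (G i)ᶜ) hε
  have : Nonempty (Fin b) := ⟨⟨0, hb⟩⟩
  refine (h.sum_projRank_compl_le_of_isIsometricRep hm hA hw hw0).trans ?_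
  simp only [Fintype.card_fin]
  exact Finset.sum_le_sum fun i _ =>
    mul_le_mul_of_nonneg_right (hlt i).le (mul_nonneg (Nat.cast_nonneg _) (hw0 _))

end Monotonicity

theorem bigSum_eq_quantumSum {r : ℕ} {V : Fin r → Type} [∀ d, Fintype (V d)]
    [∀ d, DecidableEq (V d)] (G : ∀ d, SimpleGraph (V d)) :
    bigSum G = quantumSum G fun d => d + 1 :=
  rfl

theorem monotoneExt_of_one_le {α : ℝ} (hα : 1 ≤ α) :
    MonotoneExt (fun (V : Type) (iV : Fintype V) (eV : DecidableEq V)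
      (G : SimpleGraph V) => @projRank V iV eV Gᶜ) α := by
  intro r s V W _ _ _ _ G H h
  have hmono : Monotone fun d : ℕ => (d : ℝ) ^ (α - 1) := fun d e hde =>
    Real.rpow_le_rpow (by positivity) (by exact_mod_cast hde) (by linarith)
  have hpow (d : ℕ) : (d + 1 : ℕ) * ((d + 1 : ℕ) : ℝ) ^ (α - 1) = ((d + 1 : ℕ) : ℝ) ^ α := by
    rw [Real.rpow_sub_one (by positivity), mul_div_cancel₀ _ (by positivity)]
  rw [bigSum_eq_quantumSum, bigSum_eq_quantumSum] at h
  have hle := h.sum_projRank_compl_le (fun k => k.1.succ_pos) hmono fun d => by positivity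
  simpa only [hpow] using hle

theorem cohom_bit_qubit : Cohom
    (bigSum (r := 1) (V := fun _ => Fin 2) fun _ => ⊥)
    (bigSum (r := 2) (V := fun d => Fin d.1) fun _ => ⊥) := by
  rw [bigSum_eq_quantumSum, bigSum_eq_quantumSum]
  let o : Fin (1 : Fin 2).1 := ⟨0, Nat.one_pos⟩
  refine ⟨2, fun i => single ⟨1, o, i⟩ ⟨0, i, 0⟩ 1, ?_, fun i j M hM => ?_⟩
  · simp only [conjTranspose_single, single_mul_single_same, star_one, mul_one]
    ext ⟨d, x, y⟩ ⟨d', x', y'⟩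
    obtain rfl := Subsingleton.elim d 0
    obtain rfl := Subsingleton.elim d' 0
    obtain rfl : y = 0 := Fin.fin_one_eq_zero y
    obtain rfl : y' = 0 := Fin.fin_one_eq_zero y'
    fin_cases x <;> fin_cases x' <;> simp [Fin.sum_univ_two]
  · obtain ⟨c, hc⟩ := exists_vertexBlock_self_eq_smul_one hM ⟨1, o⟩
    have hMij : M ⟨1, o, i⟩ ⟨1, o, j⟩ = (c • (1 : Matrix (Fin 2) (Fin 2) ℂ)) i j :=
      congrFun₂ hc i j
    rw [conjTranspose_single, single_mul_mul_single, hMij]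
    by_cases hij : i = j
    · subst hij
      have hunit : vertexUnit (fun d : Fin 1 => d + 1) 0 i i =
          single (⟨0, i, 0⟩ : Σ d : Fin 1, Fin 2 × Fin (d + 1)) ⟨0, i, 0⟩ 1 :=
        Fin.sum_univ_one _
      have hmem := Submodule.smul_mem _ c (vertexUnit_mem_quantumSum (n := fun d : Fin 1 => d + 1)
        (G := fun _ : Fin 1 => (⊥ : SimpleGraph (Fin 2))) (i := 0) (v := i) (v' := i)
        (SimpleGraph.irrefl _))
      rw [hunit] at hmem
      simpa using hmem
    · simp [hij]

theorem one_le_of_monotoneExt {α : ℝ} (h : MonotoneExt (fun (V : Type) (iV : Fintype V)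
      (eV : DecidableEq V) (G : SimpleGraph V) => @projRank V iV eV Gᶜ) α) : 1 ≤ α := by
  have hle := h 2 1 (fun d => Fin d.1) (fun _ => Fin 2) (fun _ => ⊥) (fun _ => ⊥) cohom_bit_qubit
  have htwo : (2 : ℝ) ^ (1 : ℝ) ≤ 2 ^ α := by
    simpa [projRank_top, one_add_one_eq_two] using hle
  exact (Real.rpow_le_rpow_left_iff one_lt_two).1 htwo

theorem projRankCompl_admissible_iff (α : ℝ) :
    MonotoneExt (fun (V : Type) (iV : Fintype V) (eV : DecidableEq V)
      (G : SimpleGraph V) => @projRank V iV eV Gᶜ) α ↔ 1 ≤ α :=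
  ⟨one_le_of_monotoneExt, monotoneExt_of_one_le⟩

end NCG
end

section
/- Let p be an odd prime such that there exists a Hadamard matrix of order 4p, and suppose the real number α is admissible for the fractional Haemers bound H_f^{𝔽_p} over the field with p elements. Then α ≥ (log₂ C(4p−1, 2p) − log₂ ∑_{i=0}^{p−1} C(4p−1, i) − log₂(4p−1)) / log₂(4p−1), where C(n,k) denotes the binomial coefficient. -/
open scoped Kronecker
open Matrix

namespace NCG

/-- The fractional Haemers bound of a graph over a field `F`. -/
noncomputable def fracHaemers (F : Type) [Field F] {V : Type} [Fintype V] [DecidableEq V]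
    (G : SimpleGraph V) : ℝ :=
  sInf {t : ℝ | ∃ (a b : ℕ) (S : V → Submodule F (Fin a → F)), 0 < b ∧
    (∀ g, Module.finrank F (S g) = b) ∧
    (∀ g, S g ⊓ (⨆ g' ∈ {g' : V | g' ≠ g ∧ ¬ G.Adj g g'}, S g') = ⊥) ∧
    t = (a : ℝ) / (b : ℝ)}

/-!
An orthonormal representation of a graph `G` in `ℂⁿ`, with adjacent vertices orthogonal, turns the
vertices into pairwise distinguishable messages for `Ḡ ⊗ Q_n`: send `v` as `v ⊗ φ v`. Admissibility
of `α` therefore forces `|V(G)| ≤ H_f(G) * n ^ α`, so one wants a graph with such a representation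
and a small Haemers bound.

Let `q = p ^ k` and `2 * q ≤ n < 4 * q`, and take the `2 * q`-subsets of an `n`-set, adjacent when
they meet in exactly `q` elements. If `n * c ^ 2 - 4 * q * c + q = 0`, the vectors `(1_A - c) / √q`
have inner products `|A ∩ B| / q - 1`, as required. In characteristic `p`, pair the vectors
`(-1) ^ |K| [K ⊆ A]` and `[K ⊆ B]`, indexed by the sets `K` with fewer than `q` elements: the
truncated alternating sum is `± C(|A ∩ B| - 1, q - 1)`, which vanishes mod `p` unless `q` divides
`|A ∩ B|`. As `0 < |A ∩ B|`, this separates distinct non-adjacent sets, and the Haemers bound is at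
most `∑ i < q, C(n, i)`.
-/

section FracHaemers

variable {F : Type} [Field F] {V W : Type}

/-- `S` is an `a/b`-subspace representation of `G` over `F`; the ambient dimension `a` is read off
from the type of `S`. -/
def IsSubspaceRep (G : SimpleGraph V) {a : ℕ} (b : ℕ) (S : V → Submodule F (Fin a → F)) : Prop :=
  (∀ g, Module.finrank F (S g) = b) ∧
    ∀ g, S g ⊓ (⨆ g' ∈ {g' : V | g' ≠ g ∧ ¬ G.Adj g g'}, S g') = ⊥

theorem isSubspaceRep_span_of_separating (G : SimpleGraph V) {a : ℕ} (u w : V → Fin a → F)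
    (hdiag : ∀ g, w g ⬝ᵥ u g ≠ 0)
    (hoff : ∀ g g', g' ≠ g → ¬ G.Adj g g' → w g ⬝ᵥ u g' = 0) :
    IsSubspaceRep G 1 fun g => F ∙ u g := by
  refine ⟨fun g => finrank_span_singleton fun h => hdiag g (by rw [h, dotProduct_zero]),
    fun g => ?_⟩
  have hker : (⨆ g' ∈ {g' : V | g' ≠ g ∧ ¬ G.Adj g g'}, F ∙ u g') ≤
      LinearMap.ker (dotProductBilin F F (w g)) := by
    refine iSup₂_le fun g' hg' => ?_
    rw [Submodule.span_singleton_le_iff_mem]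
    exact hoff g g' hg'.1 hg'.2
  rw [eq_bot_iff]
  rintro x ⟨hx, hx'⟩
  obtain ⟨c, rfl⟩ := Submodule.mem_span_singleton.1 hx
  have hzero : w g ⬝ᵥ (c • u g) = 0 := hker hx'
  rw [dotProduct_smul, smul_eq_mul] at hzero
  rw [(mul_eq_zero.1 hzero).resolve_right (hdiag g), zero_smul]
  exact zero_mem _

theorem IsSubspaceRep.comp {G : SimpleGraph V} {a b : ℕ} {S : V → Submodule F (Fin a → F)}
    (hS : IsSubspaceRep G b S) (f : W ↪ V) : IsSubspaceRep (G.comap f) b (S ∘ f) := by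
  refine ⟨fun g => hS.1 (f g), fun g => eq_bot_iff.2 ?_⟩
  rw [← hS.2 (f g)]
  refine inf_le_inf_left _ (iSup₂_le fun g' hg' => ?_)
  exact le_iSup₂_of_le (f g') ⟨f.injective.ne hg'.1, hg'.2⟩ le_rfl

theorem IsSubspaceRep.card_mul_le [Fintype V] {a b : ℕ} {S : V → Submodule F (Fin a → F)}
    (hS : IsSubspaceRep ⊥ b S) : Fintype.card V * b ≤ a := by
  classical
  have hindep : iSupIndep S := fun g => by
    rw [disjoint_iff]
    simpa using hS.2 g
  have hle := LinearMap.finrank_le_finrank_of_injective hindep.dfinsupp_lsum_injective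
  have hsum : Module.finrank F (Π₀ g, S g) = Fintype.card V * b := by
    refine (Module.finrank_directSum (R := F) fun g => S g).trans ?_
    simp [hS.1]
  rwa [hsum, Module.finrank_fin_fun] at hle

variable [Fintype V] [DecidableEq V] [Fintype W] [DecidableEq W]

theorem fracHaemers_nonneg (G : SimpleGraph V) : 0 ≤ fracHaemers F G := by
  refine Real.sInf_nonneg ?_
  rintro _ ⟨a, b, S, -, -, -, rfl⟩
  positivity

theorem fracHaemers_le_div {G : SimpleGraph V} {a b : ℕ} {S : V → Submodule F (Fin a → F)}
    (hb : 0 < b) (hS : IsSubspaceRep G b S) : fracHaemers F G ≤ a / b := by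
  refine csInf_le ⟨0, ?_⟩ ⟨a, b, S, hb, hS.1, hS.2, rfl⟩
  rintro _ ⟨a, b, S, -, -, -, rfl⟩
  positivity

theorem le_fracHaemers {G : SimpleGraph V} {x : ℝ}
    (hx : ∀ (a b : ℕ) (S : V → Submodule F (Fin a → F)), 0 < b → IsSubspaceRep G b S →
      x ≤ a / b) :
    x ≤ fracHaemers F G := by
  let e : V → Fin (Fintype.card V) → F := fun g => Pi.single (Fintype.equivFin V g) 1
  have he : IsSubspaceRep G 1 fun g => F ∙ e g :=
    isSubspaceRep_span_of_separating G e e (by simp [e]) fun g g' hne _ => by simp [e, hne.symm]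
  refine le_csInf ⟨_, _, 1, _, one_pos, he.1, he.2, rfl⟩ ?_
  rintro _ ⟨a, b, S, hb, hrank, hdisj, rfl⟩
  exact hx a b S hb ⟨hrank, hdisj⟩

theorem fracHaemers_of_isEmpty [IsEmpty V] (G : SimpleGraph V) : fracHaemers F G = 0 := by
  have hrep : IsSubspaceRep G 1 (isEmptyElim : V → Submodule F (Fin 0 → F)) :=
    ⟨isEmptyElim, isEmptyElim⟩
  exact le_antisymm (by simpa using fracHaemers_le_div one_pos hrep) (fracHaemers_nonneg G)

theorem fracHaemers_comap_le (G : SimpleGraph V) (f : W ↪ V) :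
    fracHaemers F (G.comap f) ≤ fracHaemers F G :=
  le_fracHaemers fun _ _ _ hb hS => fracHaemers_le_div hb (hS.comp f)

theorem card_le_fracHaemers_bot : (Fintype.card V : ℝ) ≤ fracHaemers F (⊥ : SimpleGraph V) := by
  refine le_fracHaemers fun a b S hb hS => ?_
  rw [le_div_iff₀ (by exact_mod_cast hb)]
  exact_mod_cast hS.card_mul_le

theorem fracHaemers_le_card_of_separating {κ : Type} [Fintype κ] (G : SimpleGraph V)
    (u w : V → κ → F) (hdiag : ∀ g, w g ⬝ᵥ u g ≠ 0)
    (hoff : ∀ g g', g' ≠ g → ¬ G.Adj g g' → w g ⬝ᵥ u g' = 0) :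
    fracHaemers F G ≤ Fintype.card κ := by
  let e := (Fintype.equivFin κ).symm
  have hrep : IsSubspaceRep G 1 fun g => F ∙ (u g ∘ e) :=
    isSubspaceRep_span_of_separating G (fun g => u g ∘ e) (fun g => w g ∘ e)
      (by simpa only [comp_equiv_dotProduct_comp_equiv] using hdiag)
      (by simpa only [comp_equiv_dotProduct_comp_equiv] using hoff)
  simpa using fracHaemers_le_div one_pos hrep

end FracHaemers

section Cohomomorphism

theorem apply_eq_zero_of_mem_graphNC {V : Type} [Fintype V] [DecidableEq V] {G : SimpleGraph V}
    {M : Matrix V V ℂ} (hM : M ∈ graphNC G) {x y : V} (hxy : ¬ (G.Adj x y ∨ x = y)) :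
    M x y = 0 := by
  induction hM using Submodule.span_induction with
  | mem M hM =>
    obtain ⟨a, b, hab, rfl⟩ := hM
    refine Matrix.single_apply_of_ne _ _ _ _ _ ?_
    rintro ⟨rfl, rfl⟩
    exact hxy hab
  | zero => rfl
  | add M N _ _ hM hN => rw [Matrix.add_apply, hM, hN, add_zero]
  | smul c M _ hM => rw [Matrix.smul_apply, hM, smul_zero]

theorem diagonal_mem_graphNC {V : Type} [Fintype V] [DecidableEq V] (G : SimpleGraph V)
    (a : V → ℂ) : Matrix.diagonal a ∈ graphNC G := by
  rw [← Matrix.sum_single_eq_diagonal]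
  refine Submodule.sum_mem _ fun v _ => ?_
  rw [← mul_one (a v), ← smul_eq_mul, ← Matrix.smul_single]
  exact Submodule.smul_mem _ _ (Submodule.subset_span ⟨v, v, Or.inr rfl, rfl⟩)

theorem kronecker_one_mem_ncTensor_qGraph {A : Type} [Fintype A] [DecidableEq A]
    {S : Submodule ℂ (Matrix A A ℂ)} {C : Matrix A A ℂ} (hC : C ∈ S) (d : ℕ) :
    C ⊗ₖ (1 : Matrix (Fin d) (Fin d) ℂ) ∈ ncTensor S (qGraph d) :=
  Submodule.subset_span ⟨C, hC, 1, Submodule.mem_span_singleton_self _, rfl⟩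

theorem exists_eq_kronecker_one_of_mem_ncTensor {A : Type} [Fintype A] [DecidableEq A]
    {S : Submodule ℂ (Matrix A A ℂ)} {d : ℕ} {M : Matrix (A × Fin d) (A × Fin d) ℂ}
    (hM : M ∈ ncTensor S (qGraph d)) :
    ∃ C ∈ S, M = C ⊗ₖ (1 : Matrix (Fin d) (Fin d) ℂ) := by
  induction hM using Submodule.span_induction with
  | mem M hM =>
    obtain ⟨X, hX, Y, hY, rfl⟩ := hM
    obtain ⟨c, rfl⟩ := Submodule.mem_span_singleton.1 hY
    exact ⟨c • X, S.smul_mem c hX, by rw [Matrix.kronecker_smul, Matrix.smul_kronecker]⟩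
  | zero => exact ⟨0, S.zero_mem, (Matrix.zero_kronecker _).symm⟩
  | add M N _ _ hM hN =>
    obtain ⟨C, hC, rfl⟩ := hM
    obtain ⟨D, hD, rfl⟩ := hN
    exact ⟨C + D, S.add_mem hC hD, (Matrix.add_kronecker _ _ _).symm⟩
  | smul c M _ hM =>
    obtain ⟨C, hC, rfl⟩ := hM
    exact ⟨c • C, S.smul_mem c hC, (Matrix.smul_kronecker _ _ _).symm⟩

section BigSum

variable {r : ℕ} {V : Fin r → Type} [∀ d, Fintype (V d)] [∀ d, DecidableEq (V d)]

theorem diagonal_mem_bigSum (G : ∀ d, SimpleGraph (V d)) (a : (Σ d, V d) → ℂ) :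
    Matrix.diagonal (fun q : Σ d : Fin r, V d × Fin (d.1 + 1) => a ⟨q.1, q.2.1⟩) ∈ bigSum G := by
  refine ⟨fun p q h => Matrix.diagonal_apply_ne _ fun hpq => h (congrArg Sigma.fst hpq),
    fun d => ?_⟩
  convert kronecker_one_mem_ncTensor_qGraph (diagonal_mem_graphNC (G d) fun v => a ⟨d, v⟩) (d.1 + 1)
    using 1
  ext ⟨v, i⟩ ⟨w, j⟩
  by_cases hv : v = w <;> by_cases hi : i = j <;> simp [Matrix.diagonal_apply, hv, hi]

theorem one_mem_bigSum (G : ∀ d, SimpleGraph (V d)) : 1 ∈ bigSum G :=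
  diagonal_mem_bigSum G fun _ => 1

theorem exists_submatrix_eq_smul_one_of_mem_bigSum {G : ∀ d, SimpleGraph (V d)}
    {M : Matrix (Σ d : Fin r, V d × Fin (d.1 + 1)) (Σ d : Fin r, V d × Fin (d.1 + 1)) ℂ}
    (hM : M ∈ bigSum G) (d : Fin r) :
    ∃ C ∈ graphNC (G d), ∀ v w : V d,
      M.submatrix (fun i : Fin (d.1 + 1) => ⟨d, v, i⟩) (fun j => ⟨d, w, j⟩) = C v w • 1 := by
  obtain ⟨C, hC, hMC⟩ := exists_eq_kronecker_one_of_mem_ncTensor (hM.2 d)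
  exact ⟨C, hC, fun v w => Matrix.ext fun i j => congrFun₂ hMC (v, i) (w, j)⟩

end BigSum

theorem ext_bigSum_index_fin_one {V : Fin 1 → Type} {x y : Σ d : Fin 1, V d × Fin (d.1 + 1)}
    (h : (⟨x.1, x.2.1⟩ : Σ d, V d) = ⟨y.1, y.2.1⟩) : x = y := by
  obtain ⟨d, v, i⟩ := x
  obtain ⟨e, w, j⟩ := y
  obtain ⟨rfl, hvw⟩ := Sigma.mk.inj_iff.1 h
  obtain rfl := eq_of_heq hvw
  obtain rfl : d = 0 := Subsingleton.elim _ _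
  obtain rfl : i = j := Subsingleton.elim (α := Fin 1) _ _
  rfl

theorem mem_bigSum_fin_one_of_isDiag {V : Fin 1 → Type} [∀ d, Fintype (V d)]
    [∀ d, DecidableEq (V d)] (G : ∀ d, SimpleGraph (V d))
    {M : Matrix (Σ d : Fin 1, V d × Fin (d.1 + 1)) (Σ d : Fin 1, V d × Fin (d.1 + 1)) ℂ}
    (hM : M.IsDiag) : M ∈ bigSum G := by
  have hdiag : M.diag = fun q => M.diag ⟨q.1, q.2.1, 0⟩ :=
    funext fun q => congrArg M.diag (ext_bigSum_index_fin_one rfl)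
  rw [← hM.diagonal_diag, hdiag]
  exact diagonal_mem_bigSum G fun s => M.diag ⟨s.1, s.2, 0⟩

/-- The cohomomorphism is the single Kraus operator `∑ w, |ψ w⟩⟨w|`. -/
theorem cohom_bot_of_orthonormal {A W : Type} [Fintype A] [DecidableEq A] [Fintype W]
    [DecidableEq W] {S : Submodule ℂ (Matrix A A ℂ)} (hone : 1 ∈ S) (ψ : W → A → ℂ)
    (hunit : ∀ w, star (ψ w) ⬝ᵥ ψ w = 1)
    (horth : ∀ M ∈ S, ∀ w w', w ≠ w' → star (ψ w) ⬝ᵥ (M *ᵥ ψ w') = 0) :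
    Cohom (bigSum fun _ : Fin 1 => (⊥ : SimpleGraph W)) S := by
  let E : Matrix A (Σ e : Fin 1, W × Fin (e.1 + 1)) ℂ := Matrix.of fun a x => ψ x.2.1 a
  have hentry : ∀ M x y, (Eᴴ * M * E) x y = star (ψ x.2.1) ⬝ᵥ (M *ᵥ ψ y.2.1) := fun M x y => by
    rw [Matrix.mul_assoc]
    rfl
  have hne : ∀ {x y : Σ e : Fin 1, W × Fin (e.1 + 1)}, x ≠ y → x.2.1 ≠ y.2.1 := fun hxy h =>
    hxy (ext_bigSum_index_fin_one (Sigma.ext (Subsingleton.elim _ _) (heq_of_eq h)))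
  have hdiag : ∀ M ∈ S, (Eᴴ * M * E).IsDiag := fun M hM x y hxy =>
    (hentry M x y).trans (horth M hM _ _ (hne hxy))
  have hEE : Eᴴ * E = 1 := by
    rw [← Matrix.mul_one Eᴴ]
    ext x y
    by_cases hxy : x = y
    · rw [hxy, hentry, Matrix.one_mulVec, hunit, Matrix.one_apply_eq]
    · rw [hdiag 1 hone hxy, Matrix.one_apply_ne hxy]
  exact ⟨1, fun _ => E, by rw [Fin.sum_univ_one, hEE],
    fun _ _ M hM => mem_bigSum_fin_one_of_isDiag _ (hdiag M hM)⟩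

theorem star_sum_single_dotProduct_mulVec {R A B ι κ : Type*} [Semiring R] [StarRing R]
    [Fintype A] [DecidableEq A] [Fintype B] [DecidableEq B] [Fintype ι] [Fintype κ]
    (M : Matrix A B R) (f : ι → A) (g : κ → B) (x : ι → R) (y : κ → R) :
    star (∑ i, Pi.single (f i) (x i)) ⬝ᵥ (M *ᵥ ∑ j, Pi.single (g j) (y j)) =
      star x ⬝ᵥ (M.submatrix f g *ᵥ y) := by
  simp only [star_sum, Pi.star_single, sum_dotProduct, single_dotProduct, Matrix.mulVec_sum,
    Matrix.mulVec_single, Finset.sum_apply, Pi.smul_apply, Matrix.col_apply,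
    MulOpposite.smul_eq_mul_unop, MulOpposite.unop_op]
  rfl

/-- Message `w` is sent as the product vector `f w ⊗ φ w` through the block `Ḡ_d ⊗ Q_d`. -/
theorem cohom_bot_bigSum_of_orthonormal {r : ℕ} {V : Fin r → Type} [∀ d, Fintype (V d)]
    [∀ d, DecidableEq (V d)] (G : ∀ d, SimpleGraph (V d)) (d : Fin r) {W : Type} [Fintype W]
    [DecidableEq W] (f : W → V d) (φ : W → Fin (d.1 + 1) → ℂ)
    (hunit : ∀ w, star (φ w) ⬝ᵥ φ w = 1)
    (horth : ∀ w w', w ≠ w' → (G d).Adj (f w) (f w') ∨ f w = f w' → star (φ w) ⬝ᵥ φ w' = 0) :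
    Cohom (bigSum fun _ : Fin 1 => (⊥ : SimpleGraph W)) (bigSum G) := by
  let ι : W → Fin (d.1 + 1) → Σ d : Fin r, V d × Fin (d.1 + 1) := fun w i => ⟨d, f w, i⟩
  have hι : ∀ w, Function.Injective (ι w) := fun w i j hij => by simpa [ι] using hij
  refine cohom_bot_of_orthonormal (one_mem_bigSum G) (fun w => ∑ i, Pi.single (ι w i) (φ w i))
    (fun w => ?_) fun M hM w w' hne => ?_
  · have hentry := star_sum_single_dotProduct_mulVec 1 (ι w) (ι w) (φ w) (φ w)
    rwa [Matrix.one_mulVec, Matrix.submatrix_one _ (hι w), Matrix.one_mulVec, hunit] at hentry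
  · obtain ⟨C, hC, hMC⟩ := exists_submatrix_eq_smul_one_of_mem_bigSum hM d
    rw [star_sum_single_dotProduct_mulVec, hMC, Matrix.smul_mulVec, Matrix.one_mulVec,
      dotProduct_smul]
    by_cases hadj : (G d).Adj (f w) (f w') ∨ f w = f w'
    · rw [horth w w' hne hadj, smul_zero]
    · rw [apply_eq_zero_of_mem_graphNC hC hadj, zero_smul]

end Cohomomorphism

theorem card_le_fracHaemers_mul_rpow {F : Type} [Field F] {α : ℝ}
    (hadm : MonotoneExt (fun (V : Type) (_ : Fintype V) (_ : DecidableEq V) (G : SimpleGraph V) =>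
      fracHaemers F G) α)
    {V : Type} [Fintype V] [DecidableEq V] (G : SimpleGraph V) {n : ℕ} (hn : n ≠ 0)
    (φ : V → Fin n → ℂ) (hunit : ∀ v, star (φ v) ⬝ᵥ φ v = 1)
    (horth : ∀ v w, G.Adj v w → star (φ v) ⬝ᵥ φ w = 0) :
    (Fintype.card V : ℝ) ≤ fracHaemers F G * (n : ℝ) ^ α := by
  obtain ⟨m, rfl⟩ := Nat.exists_eq_succ_of_ne_zero hn
  -- The family that is empty except for a copy of `G` in the last place represents `Ḡ ⊗ Q_n`.
  let H : ∀ d : Fin (m + 1), SimpleGraph {_v : V // d = Fin.last m} :=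
    fun _ => G.comap (Function.Embedding.subtype _)
  have hcohom : Cohom (bigSum fun _ : Fin 1 => (⊥ : SimpleGraph V)) (bigSum H) :=
    cohom_bot_bigSum_of_orthonormal H (Fin.last m) (fun v => ⟨v, rfl⟩) φ hunit
      fun v w hne h => horth v w (h.resolve_right fun hvw => hne (congrArg Subtype.val hvw))
  have hempty : ∀ d ≠ Fin.last m, fracHaemers F (H d) = 0 := fun d hd =>
    haveI : IsEmpty {_v : V // d = Fin.last m} := ⟨fun v => hd v.2⟩
    fracHaemers_of_isEmpty _
  calc (Fintype.card V : ℝ)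
      ≤ fracHaemers F (⊥ : SimpleGraph V) := card_le_fracHaemers_bot
    _ ≤ ∑ d : Fin (m + 1), fracHaemers F (H d) * ((d.1 + 1 : ℕ) : ℝ) ^ α := by
      simpa using hadm (m + 1) 1 _ _ H _ hcohom
    _ = fracHaemers F (H (Fin.last m)) * ((m + 1 : ℕ) : ℝ) ^ α :=
      Fintype.sum_eq_single _ fun d hd => by rw [hempty d hd, zero_mul]
    _ ≤ fracHaemers F G * ((m + 1 : ℕ) : ℝ) ^ α := by
      gcongr
      exact fracHaemers_comap_le G _

theorem sum_powerset_filter_card_lt {ι M : Type*} [AddCommMonoid M] (C : Finset ι) (q : ℕ)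
    (f : ℕ → M) :
    ∑ K ∈ C.powerset with K.card < q, f K.card =
      ∑ i ∈ Finset.range q, C.card.choose i • f i := by
  rw [← Finset.sum_fiberwise_of_maps_to (t := Finset.range q) (g := Finset.card) (by simp)]
  refine Finset.sum_congr rfl fun i hi => ?_
  have hfiber : {K ∈ {K ∈ C.powerset | K.card < q} | K.card = i} = C.powersetCard i := by
    ext K
    simp only [Finset.mem_filter, Finset.mem_powerset, Finset.mem_powersetCard]
    grind
  rw [hfiber, ← Finset.card_powersetCard, ← Finset.sum_const]
  exact Finset.sum_congr rfl fun K hK => by rw [(Finset.mem_powersetCard.1 hK).2]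

theorem card_subtype_card_lt (ι : Type*) [Fintype ι] (q : ℕ) :
    Fintype.card {K : Finset ι // K.card < q} =
      ∑ i ∈ Finset.range q, (Fintype.card ι).choose i := by
  classical
  simpa [Fintype.card_subtype] using
    sum_powerset_filter_card_lt (M := ℕ) (Finset.univ : Finset ι) q fun _ => 1

theorem sum_powerset_card_lt_neg_one_pow {ι R : Type*} [CommRing R] {C : Finset ι}
    (hC : C.Nonempty) {q : ℕ} (hq : 0 < q) :
    ∑ K ∈ C.powerset with K.card < q, (-1 : R) ^ K.card =
      (-1) ^ (q - 1) * ((C.card - 1).choose (q - 1) : ℕ) := by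
  obtain ⟨c, hc⟩ := Nat.exists_eq_add_of_le' hC.card_pos
  obtain ⟨j, rfl⟩ := Nat.exists_eq_add_of_le' hq
  have hint := congrArg (Int.cast : ℤ → R)
    (Int.alternating_sum_range_choose_eq_choose (n := c) (m := j))
  rw [sum_powerset_filter_card_lt C (j + 1) fun i => (-1 : R) ^ i, hc]
  simpa [mul_comm] using hint

theorem cast_choose_expChar_pow_add (R : Type*) [CommRing R] (p k r : ℕ) [ExpChar R p] {j : ℕ}
    (hj : j < p ^ k) : (((p ^ k + r).choose j : ℕ) : R) = (r.choose j : ℕ) := by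
  have hpow : (1 + Polynomial.X : Polynomial R) ^ (p ^ k + r) =
      (1 + Polynomial.X) ^ r + (1 + Polynomial.X) ^ r * Polynomial.X ^ p ^ k := by
    rw [pow_add, add_pow_expChar_pow, one_pow]
    ring
  simpa [Polynomial.coeff_one_add_X_pow, Polynomial.coeff_mul_X_pow', hj.not_ge] using
    congrArg (Polynomial.coeff · j) hpow

theorem cast_choose_sub_one_expChar_pow_sub_one_eq_zero (R : Type*) [CommRing R] (p k : ℕ)
    [ExpChar R p] {m : ℕ} (hm : 0 < m) (hlt : m < 2 * p ^ k) (hne : m ≠ p ^ k) :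
    (((m - 1).choose (p ^ k - 1) : ℕ) : R) = 0 := by
  rcases hne.lt_or_gt with h | h
  · rw [Nat.choose_eq_zero_of_lt (by omega), Nat.cast_zero]
  · obtain ⟨j, rfl⟩ := Nat.exists_eq_add_of_lt h
    rw [Nat.add_sub_cancel, cast_choose_expChar_pow_add R p k j (by omega),
      Nat.choose_eq_zero_of_lt (by omega), Nat.cast_zero]

theorem cast_choose_two_mul_expChar_pow_sub_one (R : Type*) [CommRing R] (p k : ℕ) [ExpChar R p] :
    (((2 * p ^ k - 1).choose (p ^ k - 1) : ℕ) : R) = 1 := by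
  have hq : 0 < p ^ k := pow_pos (expChar_pos R p) k
  rw [show 2 * p ^ k - 1 = p ^ k + (p ^ k - 1) by omega,
    cast_choose_expChar_pow_add R p k _ (by omega), Nat.choose_self, Nat.cast_one]

theorem dotProduct_subset_indicators {ι R : Type*} [Fintype ι] [DecidableEq ι] [CommRing R] (q : ℕ)
    (A B : Finset ι) :
    (fun K : {K : Finset ι // K.card < q} => if K.1 ⊆ A then (-1 : R) ^ K.1.card else 0) ⬝ᵥ
        (fun K => if K.1 ⊆ B then 1 else 0) =
      ∑ K ∈ (A ∩ B).powerset with K.card < q, (-1 : R) ^ K.card := by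
  let f : Finset ι → R := fun K => if K ⊆ A ∩ B then (-1) ^ K.card else 0
  calc _ = ∑ K : {K : Finset ι // K.card < q}, f K := by
        refine Finset.sum_congr rfl fun K _ => ?_
        simp only [f, Finset.subset_inter_iff, ite_and, mul_ite, mul_one, mul_zero]
        split_ifs <;> rfl
    _ = ∑ K : Finset ι with K.card < q, f K := (Finset.sum_subtype _ (by simp) f).symm
    _ = _ := by
        simp only [f, ← Finset.sum_filter, Finset.filter_filter]
        congr 1
        ext K
        simp only [Finset.mem_filter, Finset.mem_univ, true_and, Finset.mem_powerset, and_comm]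

theorem card_inter_lt_of_ne {ι : Type*} [DecidableEq ι] {s : ℕ}
    {A B : {A : Finset ι // A.card = s}} (hne : A ≠ B) :
    (A.1 ∩ B.1).card < s := by
  refine (Finset.card_le_card Finset.inter_subset_left).trans_eq A.2 |>.lt_of_ne fun h => hne ?_
  have hsub : A.1 ⊆ B.1 := Finset.inter_eq_left.1
    (Finset.eq_of_subset_of_card_le Finset.inter_subset_left (A.2.trans h.symm).le)
  exact Subtype.ext (Finset.eq_of_subset_of_card_le hsub (B.2.trans A.2.symm).le)

theorem inter_nonempty_of_card_lt {ι : Type*} [Fintype ι] [DecidableEq ι] {A B : Finset ι}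
    (h : Fintype.card ι < A.card + B.card) :
    (A ∩ B).Nonempty := by
  rw [← Finset.card_pos]
  have hunion := Finset.card_le_univ (A ∪ B)
  have := Finset.card_union_add_card_inter A B
  omega

theorem shifted_indicator_dotProduct {ι R : Type*} [Fintype ι] [DecidableEq ι] [CommRing R] (c : R)
    (A B : Finset ι) :
    (fun i => (if i ∈ A then 1 else 0) - c) ⬝ᵥ (fun i => (if i ∈ B then 1 else 0) - c) =
      (A ∩ B).card - c * (A.card + B.card) + Fintype.card ι * c ^ 2 := by
  have hterm : ∀ i, ((if i ∈ A then 1 else 0) - c) * ((if i ∈ B then 1 else 0) - c) =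
      (if i ∈ A ∩ B then 1 else 0) - c * ((if i ∈ A then 1 else 0) + if i ∈ B then 1 else 0) +
        c ^ 2 := fun i => by
    by_cases hA : i ∈ A <;> by_cases hB : i ∈ B <;> simp [hA, hB] <;> ring
  simp only [dotProduct, hterm, Finset.sum_add_distrib, Finset.sum_sub_distrib, ← Finset.mul_sum,
    Finset.sum_boole, Finset.filter_univ_mem, Finset.sum_const, Finset.card_univ, nsmul_eq_mul]

theorem exists_root_of_le_four_mul {n q : ℝ} (hn : 0 < n) (hnq : n ≤ 4 * q) :
    ∃ c : ℝ, n * c ^ 2 - 4 * q * c + q = 0 := by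
  obtain ⟨c, hc⟩ := exists_quadratic_eq_zero (a := n) (b := -(4 * q)) (c := q) hn.ne'
    ⟨√(4 * q * (4 * q - n)), by
      rw [Real.mul_self_sqrt (by nlinarith), discrim]
      ring⟩
  exact ⟨c, by linear_combination hc⟩

/-- The generalized Johnson graph: its vertices are the `s`-subsets of `ι`, and two distinct
subsets are adjacent if they have exactly `t` common elements. -/
def generalizedJohnsonGraph (ι : Type*) [DecidableEq ι] (s t : ℕ) :
    SimpleGraph {A : Finset ι // A.card = s} where
  Adj A B := A ≠ B ∧ (A.1 ∩ B.1).card = t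
  symm := ⟨fun A B h => ⟨h.1.symm, by rw [Finset.inter_comm]; exact h.2⟩⟩
  loopless := ⟨fun _ h => h.1 rfl⟩

theorem fracHaemers_generalizedJohnsonGraph_le {ι : Type} [Fintype ι] [DecidableEq ι]
    (F : Type) [Field F] (p k : ℕ) [ExpChar F p] (hcard : Fintype.card ι < 4 * p ^ k) :
    fracHaemers F (generalizedJohnsonGraph ι (2 * p ^ k) (p ^ k)) ≤
      ∑ i ∈ Finset.range (p ^ k), ((Fintype.card ι).choose i : ℝ) := by
  set q := p ^ k
  have hq0 : 0 < q := pow_pos (expChar_pos F p) k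
  have hinter : ∀ A B : {A : Finset ι // A.card = 2 * q}, (A.1 ∩ B.1).Nonempty := fun A B =>
    inter_nonempty_of_card_lt (by rw [A.2, B.2]; omega)
  have hdot : ∀ A B : {A : Finset ι // A.card = 2 * q},
      (fun K : {K : Finset ι // K.card < q} => if K.1 ⊆ A.1 then (-1 : F) ^ K.1.card else 0) ⬝ᵥ
        (fun K => if K.1 ⊆ B.1 then 1 else 0) =
      (-1) ^ (q - 1) * (((A.1 ∩ B.1).card - 1).choose (q - 1) : ℕ) := fun A B => by
    rw [dotProduct_subset_indicators, sum_powerset_card_lt_neg_one_pow (hinter A B) hq0]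
  have hle := fracHaemers_le_card_of_separating (generalizedJohnsonGraph ι (2 * q) q)
    (fun B (K : {K : Finset ι // K.card < q}) => if K.1 ⊆ B.1 then (1 : F) else 0)
    (fun A K => if K.1 ⊆ A.1 then (-1) ^ K.1.card else 0) (fun A => ?_) fun A B hne hadj => ?_
  · rw [card_subtype_card_lt] at hle
    exact_mod_cast hle
  · rw [hdot, Finset.inter_self, A.2, cast_choose_two_mul_expChar_pow_sub_one, mul_one]
    exact pow_ne_zero _ (neg_ne_zero.2 one_ne_zero)
  · rw [hdot, cast_choose_sub_one_expChar_pow_sub_one_eq_zero F p k (hinter A B).card_pos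
      (card_inter_lt_of_ne hne.symm) fun h => hadj ⟨hne.symm, h⟩, mul_zero]

theorem exists_generalizedJohnsonGraph_rep {ι : Type*} [Fintype ι] [Nonempty ι] [DecidableEq ι]
    {q : ℕ} (hq : 0 < q) (hcard : Fintype.card ι ≤ 4 * q) :
    ∃ φ : {A : Finset ι // A.card = 2 * q} → ι → ℝ,
      ∀ A B, φ A ⬝ᵥ φ B = (A.1 ∩ B.1).card / q - 1 := by
  have hq' : (0 : ℝ) < q := by exact_mod_cast hq
  obtain ⟨c, hc⟩ := exists_root_of_le_four_mul (n := Fintype.card ι) (q := q)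
    (by exact_mod_cast Fintype.card_pos) (by exact_mod_cast hcard)
  refine ⟨fun A => (√(q : ℝ))⁻¹ • fun i => (if i ∈ A.1 then 1 else 0) - c, fun A B => ?_⟩
  have hsqrt : (√(q : ℝ))⁻¹ * (√(q : ℝ))⁻¹ = (q : ℝ)⁻¹ := by
    rw [← mul_inv, Real.mul_self_sqrt hq'.le]
  rw [smul_dotProduct, dotProduct_smul, smul_smul, hsqrt, shifted_indicator_dotProduct, A.2, B.2,
    smul_eq_mul]
  push_cast
  field_simp
  linear_combination hc

theorem choose_le_of_monotoneExt {F : Type} [Field F] (p k : ℕ) [ExpChar F p] {n : ℕ} (hn : n ≠ 0)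
    (hnq : n < 4 * p ^ k) {α : ℝ}
    (hadm : MonotoneExt (fun (V : Type) (_ : Fintype V) (_ : DecidableEq V) (G : SimpleGraph V) =>
      fracHaemers F G) α) :
    (n.choose (2 * p ^ k) : ℝ) ≤
      (∑ i ∈ Finset.range (p ^ k), (n.choose i : ℝ)) * (n : ℝ) ^ α := by
  have : Nonempty (Fin n) := ⟨⟨0, Nat.pos_of_ne_zero hn⟩⟩
  have hq : 0 < p ^ k := pow_pos (expChar_pos F p) k
  have hq' : ((p ^ k : ℕ) : ℝ) ≠ 0 := by exact_mod_cast hq.ne'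
  obtain ⟨φ, hφ⟩ := exists_generalizedJohnsonGraph_rep (ι := Fin n) hq (by simpa using hnq.le)
  have hφC : ∀ A B, star (Complex.ofReal ∘ φ A) ⬝ᵥ (Complex.ofReal ∘ φ B) =
      (((A.1 ∩ B.1).card / (p ^ k : ℕ) - 1 : ℝ) : ℂ) := fun A B => by
    rw [← hφ]
    simp [dotProduct]
  have hcard := card_le_fracHaemers_mul_rpow hadm
    (generalizedJohnsonGraph (Fin n) (2 * p ^ k) (p ^ k)) hn (fun A => Complex.ofReal ∘ φ A)
    (fun A => by
      rw [hφC, Finset.inter_self, A.2, Nat.cast_mul, mul_div_cancel_right₀ _ hq']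
      norm_num)
    (fun A B hadj => by rw [hφC, hadj.2, div_self hq', sub_self, Complex.ofReal_zero])
  rw [Fintype.card_finset_len, Fintype.card_fin] at hcard
  refine hcard.trans ?_
  gcongr
  simpa using fracHaemers_generalizedJohnsonGraph_le (ι := Fin n) F p k (by simpa using hnq)

theorem fracHaemers_Fp_exponent_lower_bound_general {F : Type} [Field F] (p k : ℕ) [ExpChar F p]
    {n : ℕ} (hqn : 2 * p ^ k ≤ n) (hnq : n < 4 * p ^ k) {α : ℝ}
    (hadm : MonotoneExt (fun (V : Type) (_ : Fintype V) (_ : DecidableEq V) (G : SimpleGraph V) =>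
      fracHaemers F G) α) :
    (Real.logb 2 (n.choose (2 * p ^ k)) -
        Real.logb 2 (∑ i ∈ Finset.range (p ^ k), (n.choose i : ℝ))) / Real.logb 2 n ≤ α := by
  have hn : 1 < n := by omega
  have hn0 : (0 : ℝ) < n := by exact_mod_cast hn.le
  have hle := choose_le_of_monotoneExt p k (by omega) hnq hadm
  have hpow : (0 : ℝ) < (n : ℝ) ^ α := Real.rpow_pos_of_pos hn0 α
  have hchoose : (0 : ℝ) < n.choose (2 * p ^ k) := by exact_mod_cast Nat.choose_pos hqn
  have hsum : (0 : ℝ) < ∑ i ∈ Finset.range (p ^ k), (n.choose i : ℝ) :=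
    pos_of_mul_pos_left (hchoose.trans_le hle) hpow.le
  have hlog := Real.logb_le_logb_of_le one_lt_two hchoose hle
  rw [Real.logb_mul hsum.ne' hpow.ne', Real.logb_rpow_eq_mul_logb_of_pos hn0] at hlog
  rw [div_le_iff₀ (Real.logb_pos one_lt_two (by exact_mod_cast hn))]
  linarith

theorem fracHaemers_Fp_exponent_lower_bound
    (p : ℕ) [Fact p.Prime] (hodd : Odd p)
    (hHad : ∃ Hd : Matrix (Fin (4 * p)) (Fin (4 * p)) ℝ,
      (∀ i j, Hd i j = 1 ∨ Hd i j = -1) ∧ ∀ i j, i ≠ j → Hd i ⬝ᵥ Hd j = 0)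
    (α : ℝ)
    (hadm : MonotoneExt (fun (V : Type) (iV : Fintype V) (eV : DecidableEq V)
      (G : SimpleGraph V) => @fracHaemers (ZMod p) _ V iV eV G) α) :
    (Real.logb 2 ((4 * p - 1).choose (2 * p)) -
        Real.logb 2 (∑ i ∈ Finset.range p, ((4 * p - 1).choose i : ℝ)) -
        Real.logb 2 (4 * p - 1)) / Real.logb 2 (4 * p - 1) ≤ α := by
  have hp : 1 < p := (Fact.out : p.Prime).one_lt
  have hcast : ((4 * p - 1 : ℕ) : ℝ) = 4 * p - 1 := by
    rw [Nat.cast_pred (by omega), Nat.cast_mul, Nat.cast_ofNat]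
  have hlog : 0 ≤ Real.logb 2 (4 * p - 1 : ℝ) :=
    Real.logb_nonneg one_lt_two (by linarith [Nat.one_lt_cast (α := ℝ).2 hp])
  refine (div_le_div_of_nonneg_right (sub_le_self _ hlog) hlog).trans ?_
  simpa only [pow_one, hcast] using fracHaemers_Fp_exponent_lower_bound_general p 1
    (n := 4 * p - 1) (by rw [pow_one]; omega) (by rw [pow_one]; omega) hadm

end NCG
end

section
/- Let H_1, …, H_r be finite simple graphs, T = ⊕_{d=1}^r H̄_d ⊗ Q_d, and n ≥ 1 an integer. For each type Q with denominator n on {1,…,r} (i.e. a probability distribution Q on {1,…,r} with nQ(d) ∈ ℕ for every d), set M_Q = n!/∏_{d=1}^r (nQ(d))! (the size of the type class) and T_Q = (K̄_{M_Q} ⊠ H_1^{⊠nQ(1)} ⊠ ⋯ ⊠ H_r^{⊠nQ(r)})‾ ⊗ Q_{∏_{d=1}^r d^{nQ(d)}}. Then the n-fold tensor power T^{⊗n} is isomorphic as a noncommutative graph to the direct sum ⊕_Q T_Q over all types Q with denominator n. -/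
open scoped Kronecker
open Matrix

namespace NCG

/-- `n`-fold tensor power of a noncommutative graph. -/
noncomputable def ncPow {A : Type} [Fintype A] [DecidableEq A]
    (T : Submodule ℂ (Matrix A A ℂ)) (n : ℕ) :
    Submodule ℂ (Matrix (Fin n → A) (Fin n → A) ℂ) :=
  Submodule.span ℂ {M | ∃ B : Fin n → Matrix A A ℂ, (∀ i, B i ∈ T) ∧
    M = Matrix.of fun x y => ∏ i, B i (x i) (y i)}

/-- Isomorphism of noncommutative graphs: a unitary intertwining the two operator systems. -/
def NCIso {A B : Type} [Fintype A] [DecidableEq A] [Fintype B] [DecidableEq B]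
    (S : Submodule ℂ (Matrix A A ℂ)) (T : Submodule ℂ (Matrix B B ℂ)) : Prop :=
  ∃ U : Matrix B A ℂ, Uᴴ * U = 1 ∧ U * Uᴴ = 1 ∧ ∀ M, M ∈ S ↔ U * M * Uᴴ ∈ T

/-- The strong product `K̄_M ⊠ H_1^{⊠ Q 1} ⊠ ⋯ ⊠ H_r^{⊠ Q r}` of an edgeless graph on `M`
vertices with strong powers of the members of a family of graphs. -/
def typeClassGraph {r : ℕ} {W : Fin r → Type} (H : ∀ d, SimpleGraph (W d))
    (Q : Fin r → ℕ) (M : ℕ) :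
    SimpleGraph (Fin M × ∀ d, Fin (Q d) → W d) where
  Adj p q := p ≠ q ∧ p.1 = q.1 ∧
    ∀ d i, (H d).Adj (p.2 d i) (q.2 d i) ∨ p.2 d i = q.2 d i
  symm := by
    constructor
    rintro p q ⟨hne, h1, h2⟩
    exact ⟨hne.symm, h1.symm,
      fun d i => (h2 d i).imp (fun h => h.symm) (fun h => h.symm)⟩
  loopless := ⟨fun p h => h.1 rfl⟩

/-! In the standard basis, `T` and every `T_Q` consist of all matrices that are supported on a
relation `R` and are constant on the blocks of `R` cut out by the classical coordinates. Tensoring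
with `Q_d`, direct sums and tensor powers preserve this form, so the theorem reduces to a bijection
of bases that matches relations and classical coordinates; the unitary is its permutation matrix.
A basis vector of `T^{⊗n}` is a sequence in a disjoint union over `d`, and related sequences have
the same sequence of summands. Choosing, for each `t ∈ {1, …, r}ⁿ`, a numbering of the occurrences
of each letter sorts the sequences lying over `t` into families indexed by the type `Q` of `t`. The
`t` of type `Q` form an orbit of `S_n` with stabilizer of order `∏_d (nQ(d))!`, which gives the
`M_Q` edgeless vertices. -/

section BlockConstant

/-- The matrices supported on the relation `R` whose entries at related pairs depend only on the
labels of the two indices under `π`. All noncommutative graphs in the decomposition have this form: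
the label is the classical coordinate, and `R` also requires equal quantum coordinates. -/
def blockConstant {A X : Type*} (π : A → X) (R : A → A → Prop) : Submodule ℂ (Matrix A A ℂ) where
  carrier := {M | (∀ a b, ¬R a b → M a b = 0) ∧
    ∀ a b a' b', R a b → R a' b' → π a = π a' → π b = π b' → M a b = M a' b'}
  add_mem' := fun {M N} ⟨hM, hM'⟩ ⟨hN, hN'⟩ =>
    ⟨fun a b h => by rw [Matrix.add_apply, hM a b h, hN a b h, add_zero],
      fun a b a' b' h h' ha hb => by
        rw [Matrix.add_apply, Matrix.add_apply, hM' a b a' b' h h' ha hb,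
          hN' a b a' b' h h' ha hb]⟩
  zero_mem' := ⟨fun _ _ _ => rfl, fun _ _ _ _ _ _ _ _ => rfl⟩
  smul_mem' := fun c M ⟨hM, hM'⟩ =>
    ⟨fun a b h => by rw [Matrix.smul_apply, hM a b h, smul_zero],
      fun a b a' b' h h' ha hb => by
        rw [Matrix.smul_apply, Matrix.smul_apply, hM' a b a' b' h h' ha hb]⟩

open Classical in
/-- The indicator matrix of the related pairs with labels `x` and `y`; these matrices span
`blockConstant π R`. -/
noncomputable def blockUnit {A X : Type*} (π : A → X) (R : A → A → Prop) (x y : X) :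
    Matrix A A ℂ :=
  Matrix.of fun a b => if R a b ∧ π a = x ∧ π b = y then 1 else 0

theorem blockUnit_mem_blockConstant {A X : Type*} (π : A → X) (R : A → A → Prop) (x y : X) :
    blockUnit π R x y ∈ blockConstant π R := by
  classical
  refine ⟨fun a b h => if_neg fun h' => h h'.1, fun a b a' b' h h' ha hb => ?_⟩
  simp only [blockUnit, Matrix.of_apply, h, h', ha, hb]

theorem blockUnit_eq_zero {A X : Type*} {π : A → X} {R : A → A → Prop} {x y : X}
    (h : ∀ a b, R a b → π a = x → π b ≠ y) : blockUnit π R x y = 0 := by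
  ext a b
  exact if_neg fun hab => h a b hab.1 hab.2.1 hab.2.2

theorem exists_eq_sum_smul_blockUnit {A X : Type*} [Fintype X] {π : A → X} {R : A → A → Prop}
    {M : Matrix A A ℂ} (hM : M ∈ blockConstant π R) :
    ∃ C : X × X → ℂ, M = ∑ x, ∑ y, C (x, y) • blockUnit π R x y := by
  classical
  have hfactors : Function.FactorsThrough (fun p : {p : A × A // R p.1 p.2} => M p.1.1 p.1.2)
      (fun p => (π p.1.1, π p.1.2)) := fun p q h =>
    hM.2 _ _ _ _ p.2 q.2 (congrArg Prod.fst h) (congrArg Prod.snd h)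
  obtain ⟨C, hC⟩ := (Function.factorsThrough_iff _).1 hfactors
  refine ⟨C, Matrix.ext fun a b => ?_⟩
  simp only [Matrix.sum_apply, Matrix.smul_apply, blockUnit, Matrix.of_apply, smul_eq_mul,
    mul_ite, mul_one, mul_zero]
  by_cases hab : R a b
  · simpa [hab, ite_and] using congrFun hC ⟨(a, b), hab⟩
  · simp [hab, hM.1 a b hab]

theorem blockConstant_le {A X : Type*} [Finite X] {π : A → X} {R : A → A → Prop}
    {S : Submodule ℂ (Matrix A A ℂ)} (h : ∀ a b, R a b → blockUnit π R (π a) (π b) ∈ S) :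
    blockConstant π R ≤ S := by
  cases nonempty_fintype X
  have hunit (x y : X) : blockUnit π R x y ∈ S := by
    by_cases hxy : ∃ a b, R a b ∧ π a = x ∧ π b = y
    · obtain ⟨a, b, hab, rfl, rfl⟩ := hxy
      exact h a b hab
    · rw [blockUnit_eq_zero fun a b hab ha hb => hxy ⟨a, b, hab, ha, hb⟩]
      exact S.zero_mem
  intro M hM
  obtain ⟨C, rfl⟩ := exists_eq_sum_smul_blockUnit hM
  exact S.sum_mem fun x _ => S.sum_mem fun y _ => S.smul_mem _ (hunit x y)

theorem graphNC_eq_blockConstant {V : Type} [Fintype V] [DecidableEq V] (G : SimpleGraph V) :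
    graphNC G = blockConstant id fun x y => G.Adj x y ∨ x = y := by
  have hsingle {x y : V} (hxy : G.Adj x y ∨ x = y) :
      Matrix.single x y 1 = blockUnit id (fun x y => G.Adj x y ∨ x = y) x y := by
    ext v w
    simp only [blockUnit, Matrix.single_apply, Matrix.of_apply, id_eq]
    grind
  apply le_antisymm
  · refine Submodule.span_le.2 ?_
    rintro _ ⟨x, y, hxy, rfl⟩
    rw [hsingle hxy]
    exact blockUnit_mem_blockConstant _ _ _ _
  · exact blockConstant_le fun x y hxy => Submodule.subset_span ⟨x, y, hxy, (hsingle hxy).symm⟩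

theorem ncTensor_blockConstant_qGraph {A X : Type} [Fintype A] [DecidableEq A] [Finite X]
    (π : A → X) (R : A → A → Prop) (d : ℕ) :
    ncTensor (blockConstant π R) (qGraph d) =
      blockConstant (fun p : A × Fin d => π p.1) fun p q => R p.1 q.1 ∧ p.2 = q.2 := by
  apply le_antisymm
  · refine Submodule.span_le.2 ?_
    rintro _ ⟨M, hM, Y, hY, rfl⟩
    obtain ⟨c, rfl⟩ := Submodule.mem_span_singleton.1 hY
    refine ⟨fun p q hpq => ?_, fun p q p' q' hpq hpq' hp hq => ?_⟩
    · rw [Matrix.kroneckerMap_apply]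
      by_cases h : p.2 = q.2
      · rw [hM.1 _ _ fun hR => hpq ⟨hR, h⟩, zero_mul]
      · rw [Matrix.smul_apply, Matrix.one_apply_ne h, smul_zero, mul_zero]
    · simp only [Matrix.kroneckerMap_apply, Matrix.smul_apply, hpq.2, hpq'.2, Matrix.one_apply_eq,
        hM.2 _ _ _ _ hpq.1 hpq'.1 hp hq]
  · refine blockConstant_le fun p q _ => Submodule.subset_span
      ⟨blockUnit π R (π p.1) (π q.1), blockUnit_mem_blockConstant _ _ _ _, 1,
        Submodule.mem_span_singleton_self _, ?_⟩
    ext a b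
    simp only [blockUnit, Matrix.of_apply, Matrix.kroneckerMap_apply, Matrix.one_apply]
    grind

theorem ncPow_blockConstant {A X : Type} [Fintype A] [DecidableEq A] [Finite X]
    (π : A → X) (R : A → A → Prop) (n : ℕ) :
    ncPow (blockConstant π R) n =
      blockConstant (fun (a : Fin n → A) i => π (a i)) fun a b => ∀ i, R (a i) (b i) := by
  classical
  apply le_antisymm
  · refine Submodule.span_le.2 ?_
    rintro _ ⟨B, hB, rfl⟩
    refine ⟨fun a b hab => ?_, fun a b a' b' hab hab' ha hb => ?_⟩
    · obtain ⟨i, hi⟩ := not_forall.1 hab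
      exact Finset.prod_eq_zero (Finset.mem_univ i) ((hB i).1 _ _ hi)
    · simp only [Matrix.of_apply]
      exact Finset.prod_congr rfl fun i _ =>
        (hB i).2 _ _ _ _ (hab i) (hab' i) (congrFun ha i) (congrFun hb i)
  · refine blockConstant_le fun a b _ => Submodule.subset_span
      ⟨fun i => blockUnit π R (π (a i)) (π (b i)),
        fun i => blockUnit_mem_blockConstant _ _ _ _, ?_⟩
    ext a' b'
    simp only [blockUnit, Matrix.of_apply, Finset.prod_ite_zero, Finset.prod_const_one,
      Finset.mem_univ, true_imp_iff, forall_and, funext_iff]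

theorem ncIso_of_mem_iff_submatrix_mem {A B : Type} [Fintype A] [DecidableEq A] [Fintype B]
    [DecidableEq B] {S : Submodule ℂ (Matrix A A ℂ)} {T : Submodule ℂ (Matrix B B ℂ)} (e : B ≃ A)
    (h : ∀ M, M ∈ S ↔ M.submatrix e e ∈ T) : NCIso S T := by
  let U : Matrix B A ℂ := (1 : Matrix A A ℂ).submatrix e id
  have hUH : Uᴴ = (1 : Matrix A A ℂ).submatrix id e := by
    rw [Matrix.conjTranspose_submatrix, Matrix.conjTranspose_one]
  refine ⟨U, ?_, ?_, fun M => ?_⟩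
  · rw [hUH, Matrix.submatrix_mul_equiv, one_mul, Matrix.submatrix_id_id]
  · rw [hUH, ← Matrix.submatrix_mul _ _ _ _ _ Function.bijective_id, one_mul,
      Matrix.submatrix_one_equiv]
  · have hU : U * M * Uᴴ = M.submatrix e e := by
      rw [hUH]
      ext b b'
      simp [U, Matrix.mul_apply, Matrix.one_apply]
    rw [hU, h]

theorem ncIso_blockConstant {A B X Y : Type} [Fintype A] [DecidableEq A] [Fintype B]
    [DecidableEq B] {π : A → X} {R : A → A → Prop} {ρ : B → Y} {R' : B → B → Prop} (e : B ≃ A)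
    (hlabel : ∀ b b', π (e b) = π (e b') ↔ ρ b = ρ b')
    (hrel : ∀ b b', R (e b) (e b') ↔ R' b b') :
    NCIso (blockConstant π R) (blockConstant ρ R') := by
  refine ncIso_of_mem_iff_submatrix_mem e fun M => and_congr ?_ ?_
  · simp only [← e.forall_congr_right (q := fun _ => _), hrel, Matrix.submatrix_apply]
  · simp only [e.surjective.forall, hrel, hlabel, Matrix.submatrix_apply]

end BlockConstant

section SigmaRel

/-- The relation on a disjoint union that relates points of the same summand according to the
relation there and never relates points of different summands. -/
inductive SigmaRel {ι : Type*} {A : ι → Type*} (R : ∀ i, A i → A i → Prop) :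
    (Σ i, A i) → (Σ i, A i) → Prop
  | mk {i : ι} {a b : A i} : R i a b → SigmaRel R ⟨i, a⟩ ⟨i, b⟩

theorem SigmaRel.fst_eq {ι : Type*} {A : ι → Type*} {R : ∀ i, A i → A i → Prop} {x y : Σ i, A i} :
    SigmaRel R x y → x.1 = y.1
  | mk _ => rfl

theorem sigmaRel_mk_iff {ι : Type*} {A : ι → Type*} {R : ∀ i, A i → A i → Prop} {i : ι}
    {a b : A i} : SigmaRel R ⟨i, a⟩ ⟨i, b⟩ ↔ R i a b :=
  ⟨fun | .mk h => h, .mk⟩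

theorem sigmaRel_sigmaCongrRight_iff {ι : Type*} {A B : ι → Type*} {R : ∀ i, A i → A i → Prop}
    {S : ∀ i, B i → B i → Prop} {e : ∀ i, A i ≃ B i}
    (h : ∀ i a b, S i (e i a) (e i b) ↔ R i a b) (x y : Σ i, A i) :
    SigmaRel S (Equiv.sigmaCongrRight e x) (Equiv.sigmaCongrRight e y) ↔ SigmaRel R x y := by
  obtain ⟨i, a⟩ := x
  obtain ⟨j, b⟩ := y
  by_cases hij : i = j
  · subst hij
    exact sigmaRel_mk_iff.trans ((h i a b).trans sigmaRel_mk_iff.symm)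
  · exact iff_of_false (fun h => hij h.fst_eq) fun h => hij h.fst_eq

theorem ncDirectSum_blockConstant {ι : Type} [Fintype ι] [DecidableEq ι] {A X : ι → Type}
    [∀ i, Fintype (A i)] [∀ i, DecidableEq (A i)] (π : ∀ i, A i → X i)
    (R : ∀ i, A i → A i → Prop) :
    ncDirectSum (fun i => blockConstant (π i) (R i)) =
      blockConstant (Sigma.map id π) (SigmaRel R) := by
  ext M
  constructor
  · rintro ⟨hoff, hdiag⟩
    refine ⟨?_, ?_⟩
    · rintro ⟨i, a⟩ ⟨j, b⟩ hab
      by_cases hij : i = j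
      · subst hij
        exact (hdiag i).1 a b fun h => hab (.mk h)
      · exact hoff _ _ hij
    · rintro _ _ _ _ (@⟨i, a, b, hab⟩) (@⟨j, a', b', hab'⟩) ha hb
      obtain rfl : i = j := congrArg Sigma.fst ha
      exact (hdiag i).2 a b a' b' hab hab' (sigma_mk_injective ha) (sigma_mk_injective hb)
  · rintro ⟨hzero, hconst⟩
    refine ⟨fun p q hpq => hzero p q fun h => hpq h.fst_eq, fun i => ⟨fun a b hab => ?_, ?_⟩⟩
    · exact hzero _ _ fun h => hab (sigmaRel_mk_iff.1 h)
    · exact fun a b a' b' hab hab' ha hb => hconst _ _ _ _ (.mk hab) (.mk hab')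
        (congrArg (Sigma.mk i) ha) (congrArg (Sigma.mk i) hb)

/-- The relation supporting `Ḡ ⊗ Q_d`: the vertices are adjacent or equal and the quantum
coordinates agree. -/
def amplifiedRel {V : Type*} (G : SimpleGraph V) (d : ℕ) (p q : V × Fin d) : Prop :=
  (G.Adj p.1 q.1 ∨ p.1 = q.1) ∧ p.2 = q.2

theorem ncDirectSum_graphNC_qGraph {ι : Type} [Fintype ι] [DecidableEq ι] {V : ι → Type}
    [∀ i, Fintype (V i)] [∀ i, DecidableEq (V i)] (G : ∀ i, SimpleGraph (V i)) (D : ι → ℕ) :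
    ncDirectSum (fun i => ncTensor (graphNC (G i)) (qGraph (D i))) =
      blockConstant (Sigma.map id fun _ => Prod.fst)
        (SigmaRel fun i => amplifiedRel (G i) (D i)) := by
  simp only [graphNC_eq_blockConstant, ncTensor_blockConstant_qGraph, ncDirectSum_blockConstant]
  rfl

theorem typeClassGraph_adj_or_eq_iff {r : ℕ} {W : Fin r → Type} {H : ∀ d, SimpleGraph (W d)}
    {Q : Fin r → ℕ} {M : ℕ} {p q : Fin M × ∀ d, Fin (Q d) → W d} :
    (typeClassGraph H Q M).Adj p q ∨ p = q ↔
      p.1 = q.1 ∧ ∀ d i, (H d).Adj (p.2 d i) (q.2 d i) ∨ p.2 d i = q.2 d i := by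
  constructor
  · rintro (h | rfl)
    · exact h.2
    · exact ⟨rfl, fun _ _ => .inr rfl⟩
  · exact fun h => or_iff_not_imp_right.2 fun hne => ⟨hne, h⟩

end SigmaRel

section TypeClass

theorem mem_orbit_domMulAct_iff_card_fiber_eq {α ι : Type*} [Fintype α] [DecidableEq ι]
    {s t : α → ι} :
    t ∈ MulAction.orbit (Equiv.Perm α)ᵈᵐᵃ s ↔
      ∀ i, Fintype.card {a // t a = i} = Fintype.card {a // s a = i} := by
  constructor
  · rintro ⟨g, rfl⟩ i
    exact Fintype.card_congr ((DomMulAct.mk.symm g).subtypeEquiv fun a => Iff.rfl)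
  · intro h
    let σ : Equiv.Perm α := Equiv.ofFiberEquiv fun i => Fintype.equivOfCardEq (h i)
    exact ⟨DomMulAct.mk σ, funext (Equiv.ofFiberEquiv_map _)⟩

theorem card_stabilizer_domMulAct {α ι : Type*} [Fintype α] [Fintype ι] [DecidableEq ι]
    (s : α → ι) :
    Nat.card (MulAction.stabilizer (Equiv.Perm α)ᵈᵐᵃ s) =
      ∏ i, (Fintype.card {a // s a = i}).factorial := by
  classical
  rw [← DomMulAct.stabilizer_card s, ← Nat.card_eq_fintype_card]
  exact Nat.card_congr (DomMulAct.mk.subtypeEquiv fun _ => Iff.rfl).symm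

theorem exists_card_fiber_eq {α ι : Type*} [Fintype α] [Fintype ι] [DecidableEq ι] {q : ι → ℕ}
    (hq : ∑ i, q i = Fintype.card α) : ∃ s : α → ι, ∀ i, Fintype.card {a // s a = i} = q i := by
  obtain ⟨e⟩ : Nonempty (α ≃ Σ i, Fin (q i)) := Fintype.card_eq.1 (by simp [hq])
  refine ⟨fun a => (e a).1, fun i => ?_⟩
  rw [Fintype.card_congr ((e.subtypeEquiv fun _ => Iff.rfl).trans (Equiv.sigmaSubtype i)),
    Fintype.card_fin]

theorem card_functions_card_fiber_eq {α ι : Type*} [Fintype α] [Fintype ι] [DecidableEq ι]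
    {q : ι → ℕ} (hq : ∑ i, q i = Fintype.card α) :
    Nat.card {t : α → ι // ∀ i, Fintype.card {a // t a = i} = q i} =
      (Fintype.card α).factorial / ∏ i, (q i).factorial := by
  classical
  obtain ⟨s, hs⟩ := exists_card_fiber_eq hq
  simp only [← hs, ← mem_orbit_domMulAct_iff_card_fiber_eq]
  rw [← card_stabilizer_domMulAct]
  have : Finite (Equiv.Perm α)ᵈᵐᵃ := Finite.of_equiv _ DomMulAct.mk
  refine (Nat.div_eq_of_eq_mul_left Nat.card_pos ?_).symm
  rw [← Nat.card_eq_fintype_card, ← Nat.card_perm, Nat.card_congr DomMulAct.mk, ← Nat.card_prod]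
  exact Nat.card_congr (MulAction.orbitProdStabilizerEquivGroup _ s).symm

/-- The types with denominator `n` on `Fin r`, each recorded by its numerators `nQ(d)`. -/
abbrev NType (r n : ℕ) : Type :=
  {Q : Fin r → Fin (n + 1) // ∑ d, (Q d : ℕ) = n}

/-- The size `M_Q` of the type class of `Q`. -/
abbrev NType.classSize {r n : ℕ} (Q : NType r n) : ℕ :=
  n.factorial / ∏ d, (Q.1 d : ℕ).factorial

/-- The type of a sequence: its numerator at `d` is the number of occurrences of `d`. -/
def empiricalType {r n : ℕ} (t : Fin n → Fin r) : NType r n :=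
  ⟨fun d => ⟨Fintype.card {i // t i = d}, Nat.lt_succ_of_le
      ((Fintype.card_subtype_le _).trans_eq (Fintype.card_fin n))⟩, by
    simp only [← Fintype.card_sigma, Fintype.card_congr (Equiv.sigmaFiberEquiv t),
      Fintype.card_fin]⟩

theorem empiricalType_eq_iff {r n : ℕ} {t : Fin n → Fin r} {Q : NType r n} :
    empiricalType t = Q ↔ ∀ d, Fintype.card {i // t i = d} = Q.1 d := by
  simp only [Subtype.ext_iff, funext_iff, Fin.ext_iff, empiricalType]

theorem card_empiricalType_eq {r n : ℕ} (Q : NType r n) :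
    Nat.card {t : Fin n → Fin r // empiricalType t = Q} = Q.classSize := by
  simp only [empiricalType_eq_iff]
  rw [card_functions_card_fiber_eq (Q.2.trans (Fintype.card_fin n).symm), Fintype.card_fin]

/-- An enumeration of the sequences by their type and a position in the type class. -/
noncomputable def sequenceEnum (r n : ℕ) :
    (Σ Q : NType r n, Fin Q.classSize) ≃ (Fin n → Fin r) :=
  (Equiv.sigmaCongrRight fun Q => (Finite.equivFinOfCardEq (card_empiricalType_eq Q)).symm).trans
    (Equiv.sigmaFiberEquiv empiricalType)

theorem empiricalType_sequenceEnum {r n : ℕ} (p : Σ Q : NType r n, Fin Q.classSize) :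
    empiricalType (sequenceEnum r n p) = p.1 :=
  ((Finite.equivFinOfCardEq (card_empiricalType_eq p.1)).symm p.2).2

/-- A numbering of the occurrences of each letter in an enumerated sequence. The position `i` with
letter `d` is sent to `⟨d, j⟩`, where `j` is the number given to that occurrence of `d`. -/
noncomputable def slot {r n : ℕ} (p : Σ Q : NType r n, Fin Q.classSize) :
    Fin n ≃ Σ d, Fin (p.1.1 d) :=
  (Equiv.sigmaFiberEquiv (sequenceEnum r n p)).symm.trans (Equiv.sigmaCongrRight fun d =>
    Fintype.equivFinOfCardEq (empiricalType_eq_iff.1 (empiricalType_sequenceEnum p) d))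

/-- Dependent choice of summands: a family in a disjoint union is a family of indices together with
a family of points in the corresponding summands. -/
def sigmaPiEquivPiSigma {α ι : Type*} (A : ι → Type*) :
    (Σ t : α → ι, ∀ a, A (t a)) ≃ (α → Σ i, A i) where
  toFun x a := ⟨x.1 a, x.2 a⟩
  invFun y := ⟨fun a => (y a).1, fun a => (y a).2⟩

/-- Sequences in a disjoint union `⊔_d A d`, sorted by the type of their sequence of summands: the
position `i` holds the entry with index `slot i`. -/
noncomputable def sortByType {r : ℕ} (n : ℕ) (A : Fin r → Type*) :
    (Σ Q : NType r n, Fin Q.classSize × ∀ d, Fin (Q.1 d) → A d) ≃ (Fin n → Σ d, A d) :=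
  calc (Σ Q : NType r n, Fin Q.classSize × ∀ d, Fin (Q.1 d) → A d)
    _ ≃ Σ Q : NType r n, Σ _ : Fin Q.classSize, ∀ d, Fin (Q.1 d) → A d :=
      Equiv.sigmaCongrRight fun _ => (Equiv.sigmaEquivProd _ _).symm
    _ ≃ Σ p : (Σ Q : NType r n, Fin Q.classSize), ∀ d, Fin (p.1.1 d) → A d :=
      (Equiv.sigmaAssoc fun (Q : NType r n) (_ : Fin Q.classSize) =>
        ∀ d, Fin (Q.1 d) → A d).symm
    _ ≃ Σ t : Fin n → Fin r, ∀ i, A (t i) :=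
      Equiv.sigmaCongr (sequenceEnum r n) fun p => (Equiv.piCurry fun d _ => A d).symm.trans
        (Equiv.piCongrLeft' (fun x : Σ d, Fin (p.1.1 d) => A x.1) (slot p).symm)
    _ ≃ (Fin n → Σ d, A d) := sigmaPiEquivPiSigma A

theorem sortByType_apply {r n : ℕ} {A : Fin r → Type*} (Q : NType r n) (m : Fin Q.classSize)
    (u : ∀ d, Fin (Q.1 d) → A d) (i : Fin n) :
    sortByType n A ⟨Q, m, u⟩ i = ⟨(slot ⟨Q, m⟩ i).1, u _ (slot ⟨Q, m⟩ i).2⟩ :=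
  rfl

theorem sigmaRel_sortByType_iff {r n : ℕ} {A : Fin r → Type*} {R : ∀ d, A d → A d → Prop}
    (x y : Σ Q : NType r n, Fin Q.classSize × ∀ d, Fin (Q.1 d) → A d) :
    (∀ i, SigmaRel R (sortByType n A x i) (sortByType n A y i)) ↔
      SigmaRel (fun _ p q => p.1 = q.1 ∧ ∀ d j, R d (p.2 d j) (q.2 d j)) x y := by
  obtain ⟨Q, m, u⟩ := x
  constructor
  · obtain ⟨Q', m', v⟩ := y
    intro h
    have hQm : (⟨Q, m⟩ : Σ Q : NType r n, Fin Q.classSize) = ⟨Q', m'⟩ :=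
      (sequenceEnum r n).injective (funext fun i => (h i).fst_eq)
    cases hQm
    refine .mk ⟨rfl, fun d j => ?_⟩
    have hj := h ((slot ⟨Q, m⟩).symm ⟨d, j⟩)
    rwa [sortByType_apply, sortByType_apply, Equiv.apply_symm_apply, sigmaRel_mk_iff] at hj
  · rintro (@⟨_, _, ⟨_, v⟩, rfl, h⟩) i
    exact .mk (h _ _)

/-- The coordinate of `⨂_d (ℂ^{D d})^{⊗ q d}` as a family of coordinates of the factors. -/
def tensorCoordEquiv {r : ℕ} (D q : Fin r → ℕ) :
    Fin (∏ d, D d ^ q d) ≃ ∀ d, Fin (q d) → Fin (D d) :=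
  finPiFinEquiv.symm.trans (Equiv.piCongrRight fun _ => finFunctionFinEquiv.symm)

/-- The basis of `T_Q` is indexed by a position in the type class, vertices and a quantum
coordinate; the quantum coordinate is distributed over the vertices. -/
def pairCoords {r : ℕ} (W : Fin r → Type*) (D q : Fin r → ℕ) (M : Type*) :
    (M × ∀ d, Fin (q d) → W d) × Fin (∏ d, D d ^ q d) ≃
      M × ∀ d, Fin (q d) → W d × Fin (D d) where
  toFun x := (x.1.1, fun d j => (x.1.2 d j, tensorCoordEquiv D q x.2 d j))
  invFun y := ((y.1, fun d j => (y.2 d j).1), (tensorCoordEquiv D q).symm fun d j => (y.2 d j).2)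
  left_inv x := by simp
  right_inv y := by simp

theorem amplifiedRel_pairCoords_iff {r : ℕ} {W : Fin r → Type} (H : ∀ d, SimpleGraph (W d))
    (D q : Fin r → ℕ) (M : ℕ) (x y : (Fin M × ∀ d, Fin (q d) → W d) × Fin (∏ d, D d ^ q d)) :
    ((pairCoords W D q (Fin M) x).1 = (pairCoords W D q (Fin M) y).1 ∧
      ∀ d j, amplifiedRel (H d) (D d) ((pairCoords W D q (Fin M) x).2 d j)
        ((pairCoords W D q (Fin M) y).2 d j)) ↔
      amplifiedRel (typeClassGraph H q M) (∏ d, D d ^ q d) x y := by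
  rw [amplifiedRel, typeClassGraph_adj_or_eq_iff, ← (tensorCoordEquiv D q).injective.eq_iff]
  simp only [amplifiedRel, funext_iff, pairCoords, Equiv.coe_fn_mk, forall_and, and_assoc]

/-- The bijection between the standard bases of `⊕_Q T_Q` and `T^{⊗n}`. -/
noncomputable def basisEquiv {r : ℕ} (W : Fin r → Type*) (D : Fin r → ℕ) (n : ℕ) :
    (Σ Q : NType r n, (Fin Q.classSize × ∀ d, Fin (Q.1 d) → W d) ×
      Fin (∏ d, D d ^ (Q.1 d : ℕ))) ≃ (Fin n → Σ d, W d × Fin (D d)) :=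
  (Equiv.sigmaCongrRight fun Q : NType r n =>
    pairCoords W D (fun d => Q.1 d) (Fin Q.classSize)).trans (sortByType n fun d => W d × Fin (D d))

theorem basisEquiv_vertices {r : ℕ} {W : Fin r → Type*} {D : Fin r → ℕ} {n : ℕ}
    (x : Σ Q : NType r n, (Fin Q.classSize × ∀ d, Fin (Q.1 d) → W d) ×
      Fin (∏ d, D d ^ (Q.1 d : ℕ))) :
    (fun i => Sigma.map id (fun _ => Prod.fst) (basisEquiv W D n x i)) =
      sortByType n W (Sigma.map id (fun _ => Prod.fst) x) :=
  rfl

theorem sigmaRel_basisEquiv_iff {r : ℕ} {W : Fin r → Type} (H : ∀ d, SimpleGraph (W d))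
    (D : Fin r → ℕ) {n : ℕ} (x y : Σ Q : NType r n, (Fin Q.classSize × ∀ d, Fin (Q.1 d) → W d) ×
      Fin (∏ d, D d ^ (Q.1 d : ℕ))) :
    (∀ i, SigmaRel (fun d => amplifiedRel (H d) (D d)) (basisEquiv W D n x i)
        (basisEquiv W D n y i)) ↔
      SigmaRel (fun Q : NType r n => amplifiedRel (typeClassGraph H (fun d => Q.1 d) Q.classSize)
        (∏ d, D d ^ (Q.1 d : ℕ))) x y :=
  (sigmaRel_sortByType_iff _ _).trans (sigmaRel_sigmaCongrRight_iff
    (fun Q => amplifiedRel_pairCoords_iff H D _ Q.classSize) x y)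

end TypeClass

theorem tensor_power_type_decomposition_general
    {r : ℕ} {W : Fin r → Type} [∀ d, Fintype (W d)] [∀ d, DecidableEq (W d)]
    (H : ∀ d, SimpleGraph (W d)) (D : Fin r → ℕ) (n : ℕ) :
    NCIso (ncPow (ncDirectSum fun d => ncTensor (graphNC (H d)) (qGraph (D d))) n)
      (ncDirectSum fun Q : NType r n =>
        ncTensor (graphNC (typeClassGraph H (fun d => (Q.1 d : ℕ)) Q.classSize))
          (qGraph (∏ d, D d ^ (Q.1 d : ℕ)))) := by
  rw [ncDirectSum_graphNC_qGraph, ncPow_blockConstant, ncDirectSum_graphNC_qGraph]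
  refine ncIso_blockConstant (basisEquiv W D n) (fun x y => ?_) (sigmaRel_basisEquiv_iff H D)
  rw [basisEquiv_vertices, basisEquiv_vertices]
  exact (sortByType n W).injective.eq_iff

set_option synthInstance.maxHeartbeats 1000000 in
set_option synthInstance.maxSize 512 in
theorem tensor_power_type_decomposition
    {r : ℕ} {W : Fin r → Type} [∀ d, Fintype (W d)] [∀ d, DecidableEq (W d)]
    (H : ∀ d, SimpleGraph (W d)) (n : ℕ) (hn : 1 ≤ n) :
    NCIso (ncPow (bigSum H) n)
      (ncDirectSum fun Q : {Q : Fin r → Fin (n + 1) // ∑ d, (Q d : ℕ) = n} =>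
        ncTensor
          (graphNC (typeClassGraph H (fun d => (Q.1 d : ℕ))
            (n.factorial / ∏ d, ((Q.1 d : ℕ)).factorial)))
          (qGraph (∏ d, (d.1 + 1) ^ (Q.1 d : ℕ)))) :=
  tensor_power_type_decomposition_general H (fun d => d.1 + 1) n

end NCG
end
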